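/- arXiv:2603.08510 — 2 statements merged into one kernel-verified Lean document; each statement's English description precedes it below -/
import Mathlib

section
/- For every integer n ≥ 0, the number of overpartitions of 11(8n+5) is divisible by 11, i.e. p̄(11(8n+5)) ≡ 0 (mod 11). -/
/-- Number of overpartitions of `n`: pairs of a partition of `k ≤ n` into distinct parts
together with an ordinary partition of `n - k`. -/
def overpartition (n : ℕ) : ℕ :=
  ∑ k ∈ Finset.range (n + 1),
    (Nat.Partition.distincts k).card * Fintype.card (Nat.Partition (n - k))

section
open PowerSeries Finset
namespace OP

/-! ### q-binomials and the finite Jacobi triple product -/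

section qb
variable {B : Type*} [CommRing B]

/-- Gaussian binomial coefficient. -/
def qb (q : B) : ℕ → ℕ → B
  | _, 0 => 1
  | 0, _ + 1 => 0
  | N + 1, k + 1 => qb q N k + q ^ (k + 1) * qb q N (k + 1)

/-- The finite product `(q;q)_N`. -/
def poch (q : B) (N : ℕ) : B := ∏ i ∈ range N, (1 - q ^ (i + 1))

theorem qb_zero (q : B) (N : ℕ) : qb q N 0 = 1 := by cases N <;> rfl

theorem qb_succ (q : B) (N k : ℕ) :
    qb q (N + 1) (k + 1) = qb q N k + q ^ (k + 1) * qb q N (k + 1) := rfl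

theorem qb_gt (q : B) (N : ℕ) : ∀ k, N < k → qb q N k = 0 := by
  induction N with
  | zero => intro k hk; cases k with
    | zero => omega
    | succ k => rfl
  | succ N ih =>
    intro k hk
    cases k with
    | zero => omega
    | succ k => rw [qb_succ, ih k (by omega), ih (k + 1) (by omega)]; simp

theorem qb_succ' (q : B) (N : ℕ) : ∀ k e, k + e = N →
    qb q (N + 1) (k + 1) = q ^ e * qb q N k + qb q N (k + 1) := by
  induction N with
  | zero =>
    intro k e h
    obtain rfl : k = 0 := by omega
    obtain rfl : e = 0 := by omega
    simp [qb]
  | succ N ih =>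
    intro k e h
    cases k with
    | zero =>
      obtain rfl : e = N + 1 := by omega
      have h1 := ih 0 N (by omega)
      have h2 := qb_succ q N 0
      rw [qb_succ q (N + 1) 0]
      simp only [qb_zero] at h1 h2 ⊢
      linear_combination q * h1 - h2
    | succ k =>
      have h1 := ih k e (by omega)
      rw [qb_succ q (N + 1)]
      cases e with
      | zero =>
        rw [qb_gt q (N + 1) (k + 1 + 1) (by omega)]
        ring
      | succ e =>
        have h2 := ih (k + 1) e (by omega)
        have s1 := qb_succ q N k
        have s2 := qb_succ q N (k + 1)
        linear_combination h1 - s2 + q ^ (k + 2) * h2 - q ^ (e + 1) * s1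

theorem qb_mul_poch (q : B) (N : ℕ) : ∀ k e, k + e = N →
    qb q N k * poch q k * poch q e = poch q N := by
  induction N with
  | zero =>
    intro k e h
    obtain rfl : k = 0 := by omega
    obtain rfl : e = 0 := by omega
    simp [qb, poch]
  | succ N ih =>
    intro k e h
    cases k with
    | zero =>
      obtain rfl : e = N + 1 := by omega
      simp [qb_zero, poch]
    | succ k =>
      have h1 := ih k e (by omega)
      have hN : poch q (N + 1) = poch q N * (1 - q ^ (N + 1)) := by simp [poch, prod_range_succ]
      have hk : poch q (k + 1) = poch q k * (1 - q ^ (k + 1)) := by simp [poch, prod_range_succ]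
      cases e with
      | zero =>
        obtain rfl : k = N := by omega
        rw [qb_succ, qb_gt q k (k+1) (by omega), hN]
        linear_combination (1 - q ^ (k + 1)) * h1
      | succ e =>
        have h2 := ih (k + 1) e (by omega)
        have he : poch q (e + 1) = poch q e * (1 - q ^ (e + 1)) := by simp [poch, prod_range_succ]
        have hp : q ^ (N + 1) = q ^ (k + 1) * q ^ (e + 1) := by rw [← pow_add]; congr 1; omega
        rw [qb_succ, hN, hp]
        rw [he] at h1 ⊢
        rw [hk] at h2 ⊢
        linear_combination (1 - q ^ (k + 1)) * h1 + (q ^ (k + 1) * (1 - q ^ (e + 1))) * h2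

theorem sum_shift (g : ℕ → B) (u v : ℕ → B) (M : ℕ) (h0 : g 0 = u 0)
    (h : ∀ k, k < M → g (k + 1) = u (k + 1) + v k) (hl : g (M+1) = v M) :
    ∑ k ∈ range (M + 2), g k = ∑ k ∈ range (M + 1), (u k + v k) := by
  rw [sum_range_succ, sum_range_succ', sum_add_distrib, sum_range_succ' u, sum_range_succ v,
    sum_congr rfl (fun k hk => h k (mem_range.1 hk)), sum_add_distrib, hl, h0]
  ring

theorem finite_jtp (q a b : B) (T : ℤ → B) (h0 : T 0 = 1)
    (ha : ∀ n e : ℕ, a * q ^ n * T (n - e) = q ^ e * T (n - e + 1))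
    (hb : ∀ m e : ℕ, b * q ^ m * T (e - m) = q ^ e * T (e - m - 1)) (n m : ℕ) :
    (∏ i ∈ range n, (1 + a * q ^ i)) * ∏ i ∈ range m, (1 + b * q ^ i) =
      ∑ k ∈ range (n + m + 1), qb q (n + m) k * T (k - m) := by
  induction m with
  | zero =>
    induction n with
    | zero => simp [qb, h0]
    | succ n ih =>
      simp only [range_zero, prod_empty, mul_one, add_zero, CharP.cast_eq_zero, sub_zero] at ih ⊢
      rw [prod_range_succ, ih, sum_mul]
      symm
      rw [sum_shift _ (fun k => qb q n k * T k) (fun k => qb q n k * T k * (a * q ^ n))]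
      · refine sum_congr rfl fun k _ => by ring
      · simp [qb_zero]
      · intro k hk
        obtain ⟨e, rfl⟩ := Nat.exists_eq_add_of_lt hk
        have := ha (k + e + 1) (e + 1)
        rw [qb_succ' q _ k (e + 1) (by omega)]
        have e1 : (((k + e + 1 : ℕ) : ℤ) - (e + 1 : ℕ)) = k := by push_cast; ring
        rw [e1] at this
        push_cast
        linear_combination (- qb q (k + e + 1) k) * this
      · have := ha n 0
        rw [qb_succ' q n n 0 (by omega), qb_gt q n (n + 1) (by omega)]
        simp only [CharP.cast_eq_zero, sub_zero] at this
        push_cast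
        linear_combination (- qb q n n) * this
  | succ m ih =>
    rw [prod_range_succ, ← mul_assoc, ih, sum_mul]
    symm
    have hs : n + (m + 1) + 1 = n + m + 2 := by omega
    rw [hs, sum_shift _ (fun k => qb q (n + m) k * T (k - m) * (b * q ^ m))
      (fun k => qb q (n + m) k * T (k - m))]
    · refine sum_congr rfl fun k _ => by ring
    · have := hb m 0
      simp only [CharP.cast_eq_zero, pow_zero, one_mul, qb_zero, zero_sub] at this ⊢
      rw [mul_comm, this]; congr 1; push_cast; ring
    · intro k hk
      have := hb m (k + 1)
      rw [← add_assoc n m 1, qb_succ]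
      have e1 : (((k + 1 : ℕ) : ℤ) - (m + 1 : ℕ)) = k - m := by push_cast; ring
      have e2 : (((k + 1 : ℕ) : ℤ) - (m : ℕ) - 1) = k - m := by push_cast; ring
      rw [e1]
      rw [e2] at this
      linear_combination (- qb q (n+m) (k+1)) * this
    · rw [← add_assoc n m 1, qb_succ, qb_gt q (n + m) (n + m + 1) (by omega)]
      have e1 : (((n + m + 1 : ℕ) : ℤ) - (m + 1 : ℕ)) = (n + m : ℕ) - m := by push_cast; ring
      rw [e1]; ring

theorem sum_two_sided (W : ℤ → B) (M : ℕ) :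
    ∑ k ∈ range (M + M + 1), W (k - M) =
      W M + ∑ j ∈ range M, (W j + W (-(j + 1))) := by
  rw [add_assoc, sum_range_add, sum_range_succ', sum_add_distrib, ← sum_range_reflect]
  have : ∑ j ∈ range M, W ((M - 1 - j : ℕ) - M) = ∑ j ∈ range M, W (-(j + 1)) := by
    refine sum_congr rfl fun j hj => ?_
    have := mem_range.1 hj
    congr 1; push_cast [Nat.cast_sub, show 1 + j ≤ M by omega, Nat.sub_sub]; ring
  rw [this]
  have h2 : ∑ j ∈ range M, W ((M + (j + 1) : ℕ) - M) + W ((M + 0 : ℕ) - M) =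
      W M + ∑ j ∈ range M, W j := by
    have := sum_range_succ (fun j : ℕ => W j) M
    rw [sum_range_succ'] at this
    rw [add_comm (W M), ← this]
    congr 1
    · refine sum_congr rfl fun j _ => ?_
      congr 1; push_cast; ring
    · simp
  rw [h2]; ring
end qb
end OP

end

section
open PowerSeries Finset
namespace OP
/-! ### The Euler product and limits -/

noncomputable section

instance fact_eleven : Fact (Nat.Prime 11) := ⟨by norm_num⟩

/-- Coefficient field. -/
abbrev K := ZMod 11
/-- Power series over `ZMod 11`. -/
abbrev A := PowerSeries (ZMod 11)

theorem eq_of_dvd {u v : A} (h : ∀ M : ℕ, (X : A) ^ M ∣ u - v) : u = v := by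
  ext n
  have := (X_pow_dvd_iff.1 (h (n + 1))) n (by omega)
  rwa [map_sub, sub_eq_zero] at this

/-- `q ↦ q^k`. -/
def e2 : A →ₐ[ZMod 11] A := expand 2 (by norm_num)
/-- `q ↦ -q`. -/
def Ng : A →+* A := evalNegHom

theorem e2_X : e2 X = X ^ 2 := by simp [e2]
theorem Ng_X : Ng X = -X := by simp [Ng]
theorem e2_coeff_even (g : A) (n : ℕ) : coeff (2 * n) (e2 g) = coeff n g := by
  simp [e2]
theorem e2_coeff_odd (g : A) (n : ℕ) : coeff (2 * n + 1) (e2 g) = 0 := by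
  apply coeff_expand_of_not_dvd; omega
theorem Ng_coeff (g : A) (n : ℕ) : coeff n (Ng g) = (-1) ^ n * coeff n g := by
  simp [Ng, evalNegHom]
theorem Ng_Ng (g : A) : Ng (Ng g) = g := by
  ext n; rw [Ng_coeff, Ng_coeff, ← mul_assoc, ← mul_pow]; simp
theorem Ng_e2 (g : A) : Ng (e2 g) = e2 g := by
  ext n; rw [Ng_coeff]
  rcases Nat.even_or_odd' n with ⟨k, rfl | rfl⟩
  · simp [pow_mul]
  · simp [e2_coeff_odd]
theorem e2_inj {g h : A} (H : e2 g = e2 h) : g = h := by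
  ext n; rw [← e2_coeff_even, H, e2_coeff_even]
theorem coeff_odd_of (g a b : A) (h : g = e2 a + X * e2 b) (n : ℕ) :
    coeff (2 * n + 1) g = coeff n b := by
  rw [h, map_add, e2_coeff_odd, coeff_succ_X_mul, e2_coeff_even, zero_add]

/-- The Euler product `∏ (1 - q^n)`. -/
def f : A := pentagonalSeries (ZMod 11)
/-- Its dilation. -/
def f2 : A := e2 f

theorem poch_coeff_stable (M L n : ℕ) (h : n ≤ M) :
    coeff n (poch (X : A) (M + L)) = coeff n (poch (X : A) M) := by
  induction L with
  | zero => rfl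
  | succ L ih =>
    rw [← ih, ← add_assoc]
    have : poch (X : A) (M + L + 1) = poch (X : A) (M + L) - X ^ (M + L + 1) * poch (X : A) (M + L) := by
      rw [poch, prod_range_succ, ← poch]; ring
    rw [this, map_sub, coeff_X_pow_mul', if_neg (by omega), sub_zero]

theorem f_dvd (m : ℕ) : (X : A) ^ (m + 1) ∣ f - poch X m := by
  rw [X_pow_dvd_iff]
  intro n hn
  obtain ⟨s, hs⟩ := Filter.eventually_atTop.1 (coeff_prod_one_sub_X_pow_eventually_eq (ZMod 11) n)
  have h1 := hs (range (m + (s.sup id + 1))) (fun x hx => by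
    have := le_sup (f := id) hx
    simp only [id] at this
    rw [mem_range]; omega)
  have h2 := poch_coeff_stable m (s.sup id + 1) n (by omega)
  rw [poch] at h2
  rw [map_sub, f, ← h1, h2, sub_self]

theorem e2_dvd {g h : A} {M : ℕ} (H : (X : A) ^ M ∣ g - h) : (X : A) ^ (2 * M) ∣ e2 g - e2 h := by
  have := map_dvd e2 H
  rwa [map_pow, e2_X, ← pow_mul, map_sub] at this

theorem Ng_dvd {g h : A} {M : ℕ} (H : (X : A) ^ M ∣ g - h) : (X : A) ^ M ∣ Ng g - Ng h := by
  have := map_dvd Ng H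
  rwa [map_pow, Ng_X, neg_pow, map_sub, ((isUnit_one.neg).pow M).mul_left_dvd] at this

theorem e2_poch (m : ℕ) : e2 (poch X m) = poch (X ^ 2) m := by
  simp [poch, map_prod, e2_X]

theorem f2_dvd (m : ℕ) : ((X : A) ^ 2) ^ (m + 1) ∣ f2 - poch (X ^ 2) m := by
  rw [← pow_mul, ← e2_poch]; exact e2_dvd (f_dvd m)

theorem f_const : constantCoeff f = 1 := by
  have := X_pow_dvd_iff.1 (f_dvd 0) 0 (by omega)
  rw [map_sub, sub_eq_zero] at this
  simpa [poch] using this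
theorem f2_const : constantCoeff f2 = 1 := by
  have := e2_coeff_even f 0
  simpa [f2, f_const] using this

/-- `1/f`. -/
def g : A := f⁻¹
/-- `1/f2`. -/
def g2 : A := f2⁻¹
theorem fg : f * g = 1 := PowerSeries.mul_inv_cancel _ (by rw [f_const]; exact one_ne_zero)
theorem fg2 : f2 * g2 = 1 := PowerSeries.mul_inv_cancel _ (by rw [f2_const]; exact one_ne_zero)
theorem f_unit : IsUnit f := .of_mul_eq_one _ fg
theorem f2_unit : IsUnit f2 := .of_mul_eq_one _ fg2
theorem e2_g : e2 g = g2 := by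
  have := congrArg e2 fg
  rw [map_mul, map_one] at this
  change f2 * _ = 1 at this
  exact f2_unit.mul_left_cancel (this.trans fg2.symm)

theorem qb_lim (q F : A) (hF : IsUnit F) (h : ∀ m, q ^ (m + 1) ∣ F - poch q m) (k l : ℕ) :
    q ^ (min k l + 1) ∣ F * qb q (k + l) k - 1 := by
  have hk := (pow_dvd_pow q (show min k l + 1 ≤ k + 1 by omega)).trans (h k)
  have hl := (pow_dvd_pow q (show min k l + 1 ≤ l + 1 by omega)).trans (h l)
  have hN := (pow_dvd_pow q (show min k l + 1 ≤ k + l + 1 by omega)).trans (h (k + l))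
  have e := qb_mul_poch q (k + l) k l rfl
  rw [← hF.dvd_mul_left]
  have : F * (F * qb q (k + l) k - 1) = (F - poch q k) * (F * qb q (k + l) k)
      + (F - poch q l) * (poch q k * qb q (k + l) k) - (F - poch q (k + l)) := by
    linear_combination e
  rw [this]
  exact dvd_sub (dvd_add (hk.mul_right _) (hl.mul_right _)) hN

theorem theta_lim (q F : A) (hF : IsUnit F) (h : ∀ m, q ^ (m + 1) ∣ F - poch q m)
    (W : ℤ → A) (M : ℕ)
    (hW : ∀ j : ℤ, j.natAbs ≤ M → X ^ M ∣ q ^ (M - j.natAbs + 1) * W j) :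
    X ^ M ∣ F * (∑ k ∈ range (M + M + 1), qb q (M + M) k * W (k - M)) -
      (W M + ∑ j ∈ range M, (W j + W (-(j + 1)))) := by
  rw [← sum_two_sided, mul_sum, ← sum_sub_distrib]
  refine dvd_sum fun k hk => ?_
  have hk := mem_range.1 hk
  obtain ⟨l, hl⟩ := Nat.exists_eq_add_of_le (show k ≤ M + M by omega)
  have h1 := qb_lim q F hF h k l
  rw [← hl, show min k l = M - ((k : ℤ) - M).natAbs by omega] at h1
  have h2 := mul_dvd_mul_right h1 (W (k - M))
  refine (hW _ (by omega)).trans (h2.trans ?_)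
  apply dvd_of_eq; ring

/-- triangular numbers -/
def tri (j : ℤ) : ℕ := (j * (j + 1) / 2).toNat
theorem two_tri (j : ℤ) : 2 * (tri j : ℤ) = j * (j + 1) := by
  have h1 : 0 ≤ j * (j + 1) := by
    rcases le_or_gt 0 j with h | h
    · positivity
    · nlinarith
  have h2 : (2 : ℤ) ∣ j * (j + 1) := (Int.even_mul_succ_self j).two_dvd
  unfold tri; omega
theorem tri_neg (j : ℤ) : tri (-(j + 1)) = tri j := by
  have := two_tri j
  have h := two_tri (-(j+1))
  have : (-(j+1)) * (-(j+1)+1) = j * (j+1) := by ring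
  omega
theorem tri_zero : tri 0 = 0 := rfl
theorem tri_ge (j : ℕ) : j ≤ tri j := by
  have := two_tri j
  rcases Nat.eq_zero_or_pos j with rfl | h
  · simp
  · have : (j : ℤ) * 1 ≤ j * j := by gcongr; exact_mod_cast h
    have : (j : ℤ) ≤ tri j := by linarith
    exact_mod_cast this

theorem tri_bound (j : ℤ) : j.natAbs ≤ tri j + 1 := by
  have h := two_tri j
  have : (j.natAbs : ℤ) ≤ tri j + 1 := by
    rcases abs_cases j with ⟨h1, h2⟩ | ⟨h1, h2⟩
    · rw [Int.natCast_natAbs, h1]; nlinarith [sq_nonneg (j - 1)]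
    · rw [Int.natCast_natAbs, h1]
      rcases lt_or_ge j (-2) with h3 | h3
      · nlinarith [mul_nonneg (show (0:ℤ) ≤ -j - 1 by linarith) (show (0:ℤ) ≤ -j - 2 by linarith)]
      · have : j = -1 ∨ j = -2 := by omega
        rcases this with rfl | rfl <;> omega
  exact_mod_cast this

theorem tri_W (M : ℕ) (j : ℤ) (c : A) (h : j.natAbs ≤ M) :
    (X : A) ^ M ∣ X ^ (M - j.natAbs + 1) * (c * X ^ tri j) := by
  have := tri_bound j
  rw [show (X : A) ^ (M - j.natAbs + 1) * (c * X ^ tri j) = c * X ^ (M - j.natAbs + 1 + tri j) by ring]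
  exact (pow_dvd_pow _ (by omega)).mul_left _
end
end OP

end

section
open PowerSeries Finset
namespace OP
/-! ### Theta functions -/
noncomputable section

theorem two_ne : (2 : ZMod 11) ≠ 0 := by decide

theorem dvd_trans_sub {u v w : A} {d : A} (h1 : d ∣ u - v) (h2 : d ∣ v - w) : d ∣ u - w := by
  have := dvd_add h1 h2
  rwa [sub_add_sub_cancel] at this

theorem dvd_mul_sub {u v u' v' : A} {d : A} (h1 : d ∣ u - v) (h2 : d ∣ u' - v') :
    d ∣ u * u' - v * v' := by
  rw [show u * u' - v * v' = (u - v) * u' + v * (u' - v') by ring]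
  exact dvd_add (h1.mul_right _) (h2.mul_left _)

/-- `∏ (1 - q^(2i+1))` -/
def O : A := f * g2

/-- finite version -/
def oddp (M : ℕ) : A := ∏ i ∈ range M, (1 - X ^ (2 * i + 1))

theorem poch_even_odd (M : ℕ) : poch (X : A) (2 * M) = poch (X ^ 2) M * oddp M := by
  induction M with
  | zero => simp [poch, oddp]
  | succ M ih =>
    rw [show 2 * (M + 1) = 2 * M + 1 + 1 by ring, poch, prod_range_succ, prod_range_succ, ← poch, ih,
      poch, poch, oddp, oddp, prod_range_succ _ M, prod_range_succ _ M]
    ring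

theorem O_dvd (M : ℕ) : (X : A) ^ M ∣ O - oddp M := by
  have h1 := (pow_dvd_pow X (show M ≤ 2 * M + 1 by omega)).trans (f_dvd (2 * M))
  have h2 : (X : A) ^ M ∣ f2 - poch (X ^ 2) M := by
    refine Dvd.dvd.trans ?_ (f2_dvd M)
    rw [← pow_mul]; exact pow_dvd_pow _ (by omega)
  rw [poch_even_odd] at h1
  rw [← f2_unit.dvd_mul_left]
  have : f2 * (O - oddp M) = (f - poch (X ^ 2) M * oddp M) - (f2 - poch (X ^ 2) M) * oddp M := by
    rw [O]; linear_combination f * fg2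
  rw [this]
  exact dvd_sub h1 (h2.mul_right _)

theorem NgO_mul : Ng O * O = e2 O := by
  refine eq_of_dvd fun M => ?_
  have h1 := dvd_mul_sub (Ng_dvd (O_dvd M)) (O_dvd M)
  have h2 := (pow_dvd_pow X (show M ≤ 2 * M by omega)).trans (e2_dvd (O_dvd M))
  have h3 : Ng (oddp M) * oddp M = e2 (oddp M) := by
    simp only [oddp, map_prod, map_sub, map_one, map_pow, Ng_X, e2_X]
    rw [← prod_mul_distrib]
    refine prod_congr rfl fun i _ => ?_
    rw [Odd.neg_pow ⟨i, rfl⟩]; ring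
  rw [h3] at h1
  have := dvd_sub h1 h2
  rwa [sub_sub_sub_cancel_right] at this

/-- `φ(-q)` -/
def phim : A := f ^ 2 * g2
/-- `φ(q)` -/
def phi : A := Ng phim
/-- `ψ(q)` -/
def psi : A := f2 ^ 2 * g

theorem Ng_f2 : Ng f2 = f2 := Ng_e2 f

theorem phim_eq : phim = f2 * O ^ 2 := by
  rw [phim, O]; linear_combination (- f ^ 2 * g2) * fg2

theorem phi_eq : phi = f2 * (Ng O) ^ 2 := by
  rw [phi, phim_eq, map_mul, map_pow, Ng_f2]

theorem phi_mul_phim : phi * phim = (e2 phim) ^ 2 := by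
  rw [phi_eq, phim_eq]
  have h1 : e2 f2 * e2 g2 = 1 := by rw [← map_mul, fg2, map_one]
  have h2 : e2 O = f2 * e2 g2 := by rw [O, map_mul]; rfl
  rw [map_mul, map_pow]
  have : f2 * Ng O ^ 2 * (f2 * O ^ 2) = f2 ^ 2 * (Ng O * O) ^ 2 := by ring
  rw [this, NgO_mul, h2]
  linear_combination (- f2 ^ 4 * (e2 g2) ^ 2 * (e2 f2 * e2 g2 + 1)) * h1

theorem psi_sq : psi ^ 2 = phi * e2 psi := by
  have h1 : e2 f2 * e2 g2 = 1 := by rw [← map_mul, fg2, map_one]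
  have h2 : e2 O = f2 * e2 g2 := by rw [O, map_mul]; rfl
  have h3 : e2 psi = (e2 f2) ^ 2 * g2 := by rw [psi, map_mul, map_pow, e2_g]
  have h4 : Ng O * f = f2 ^ 2 * e2 g2 := by
    have := NgO_mul
    rw [h2, O] at this
    rw [map_mul] at this
    rw [O, map_mul]
    linear_combination f2 * this - (Ng f * Ng g2 * f) * fg2
  have h5 : Ng O = f2 ^ 2 * e2 g2 * g := by
    linear_combination g * h4 - Ng O * fg
  rw [h3, psi, phi_eq, h5]
  linear_combination (- f2 ^ 4 * g ^ 2 * (f2 * g2) * (e2 f2 * e2 g2 + 1)) * h1 - f2 ^ 4 * g ^ 2 * fg2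

/-- partial sums -/
def phiS (M : ℕ) : A := 1 + 2 * ∑ j ∈ range M, X ^ ((j + 1) ^ 2)
/-- partial sums -/
def psiS (M : ℕ) : A := ∑ j ∈ range M, X ^ tri j

theorem sq_sum (y : A) (M : ℕ) :
    y ^ (M ^ 2) + ∑ j ∈ range M, (y ^ (j ^ 2) + y ^ ((j + 1) ^ 2)) =
      1 + 2 * ∑ j ∈ range M, y ^ ((j + 1) ^ 2) := by
  induction M with
  | zero => simp
  | succ M ih => rw [sum_range_succ, sum_range_succ]; linear_combination ih

theorem phim_dvd (M : ℕ) : (X : A) ^ M ∣ phim - (1 + 2 * ∑ j ∈ range M, (-X) ^ ((j + 1) ^ 2)) := by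
  have H := finite_jtp ((-X : A) ^ 2) (-X) (-X) (fun j => (-X) ^ (j.natAbs ^ 2)) (by simp)
    (fun n e => by
      rw [← pow_mul, ← pow_mul, ← pow_succ', ← pow_add, ← pow_add]
      congr 1
      zify
      rw [sq_abs, sq_abs]; ring)
    (fun n e => by
      rw [← pow_mul, ← pow_mul, ← pow_succ', ← pow_add, ← pow_add]
      congr 1
      zify
      rw [sq_abs, sq_abs]; ring) M M
  have L := theta_lim (X ^ 2) f2 f2_unit f2_dvd (fun j => (-X) ^ (j.natAbs ^ 2)) M (fun j hj => by
    rw [neg_pow, ← pow_mul, mul_left_comm, ← pow_add]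
    refine (pow_dvd_pow _ ?_).mul_left _
    have : 2 * j.natAbs ≤ j.natAbs ^ 2 + 1 := by nlinarith [sq_nonneg ((j.natAbs : ℤ) - 1)]
    omega)
  rw [neg_sq] at H
  rw [← H] at L
  have h1 : ∏ i ∈ range M, (1 + -X * ((X : A) ^ 2) ^ i) = oddp M := by
    refine prod_congr rfl fun i _ => ?_
    rw [← pow_mul, pow_succ]; ring
  rw [h1] at L
  have h2 := sq_sum (-X) M
  have h3 : (-X : A) ^ ((M : ℤ).natAbs ^ 2) + ∑ j ∈ range M, ((-X : A) ^ ((j : ℤ).natAbs ^ 2)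
      + (-X) ^ ((-((j : ℤ) + 1)).natAbs ^ 2)) = 1 + 2 * ∑ j ∈ range M, (-X) ^ ((j + 1) ^ 2) := by
    rw [← h2]
    congr 1
  rw [h3] at L
  refine dvd_trans_sub ?_ L
  rw [phim_eq, sq, ← mul_sub]
  exact (dvd_mul_sub (O_dvd M) (O_dvd M)).mul_left _

theorem phi_dvd (M : ℕ) : (X : A) ^ M ∣ phi - phiS M := by
  have := Ng_dvd (phim_dvd M)
  simpa [phi, phiS, Ng_X, map_sum, map_ofNat Ng 2] using this

theorem psi_dvd (M : ℕ) : (X : A) ^ M ∣ psi - psiS M := by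
  have H := finite_jtp (X : A) X 1 (fun j => X ^ tri j) (by simp [tri_zero])
    (fun n e => by
      rw [← pow_succ', ← pow_add, ← pow_add]
      congr 1
      have h1 := two_tri (n - e)
      have h2 := two_tri (n - e + 1)
      zify
      linarith)
    (fun n e => by
      rw [one_mul, ← pow_add, ← pow_add]
      congr 1
      have h1 := two_tri (e - n)
      have h2 := two_tri (e - n - 1)
      zify
      linarith) M M
  have L := theta_lim X f f_unit f_dvd (fun j => X ^ tri j) M (fun j hj => by
    simpa using tri_W M j 1 hj)
  rw [← H] at L
  have hD : (X : A) ^ M ∣ f2 * g - ∏ i ∈ range M, (1 + X * X ^ i) := by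
    have h1 := (pow_dvd_pow X (show M ≤ M + 1 by omega)).trans (f_dvd M)
    have h2 : (X : A) ^ M ∣ f2 - poch (X ^ 2) M := by
      refine Dvd.dvd.trans ?_ (f2_dvd M)
      rw [← pow_mul]; exact pow_dvd_pow _ (by omega)
    have h3 : poch ((X : A) ^ 2) M = poch X M * ∏ i ∈ range M, (1 + X * X ^ i) := by
      rw [poch, poch, ← prod_mul_distrib]
      refine prod_congr rfl fun i _ => ?_
      rw [← pow_mul]; ring
    rw [h3] at h2
    rw [← f_unit.dvd_mul_left]
    have : f * (f2 * g - ∏ i ∈ range M, (1 + (X : A) * X ^ i)) =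
      (f2 - poch X M * ∏ i ∈ range M, (1 + X * X ^ i)) -
        (f - poch X M) * ∏ i ∈ range M, (1 + X * X ^ i) := by
      linear_combination f2 * fg
    rw [this]
    exact dvd_sub h2 (h1.mul_right _)
  have hD2 : (X : A) ^ M ∣ 2 * (f2 * g) - ∏ i ∈ range M, (1 + 1 * X ^ i) := by
    have h1 := prod_range_succ (fun i => 1 + (1 : A) * X ^ i) M
    rw [prod_range_succ'] at h1
    have h2 : ∏ i ∈ range M, (1 + (1 : A) * X ^ (i + 1)) = ∏ i ∈ range M, (1 + X * X ^ i) :=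
      prod_congr rfl fun i _ => by ring
    rw [h2] at h1
    have : 2 * (f2 * g) - ∏ i ∈ range M, (1 + 1 * X ^ i) =
      2 * (f2 * g - ∏ i ∈ range M, (1 + (X : A) * X ^ i)) +
        X ^ M * ∏ i ∈ range M, (1 + 1 * X ^ i) := by
      linear_combination h1
    rw [this]
    exact dvd_add (hD.mul_left _) (dvd_mul_right _ _)
  have h1 := (dvd_mul_sub hD hD2).mul_left f
  rw [mul_sub] at h1
  have h2 := dvd_trans_sub h1 L
  have h3 : (X : A) ^ M ∣ (X ^ tri M + ∑ j ∈ range M, (X ^ tri j + X ^ tri (-(j + 1)))) - 2 * psiS M := by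
    simp only [tri_neg]
    rw [psiS, mul_sum]
    simp only [two_mul]
    rw [add_sub_cancel_right]
    exact pow_dvd_pow _ (tri_ge M)
  have h4 := dvd_trans_sub h2 h3
  have h5 : f * (f2 * g * (2 * (f2 * g))) - 2 * psiS M = 2 * (psi - psiS M) := by
    rw [psi]; linear_combination 2 * f2 ^ 2 * g * fg
  rw [h5] at h4
  have hu : IsUnit (2 : A) := by
    have : (2 : A) = C (2 : ZMod 11) := (map_ofNat C 2).symm
    rw [this]; exact (IsUnit.mk0 _ two_ne).map _
  rwa [hu.dvd_mul_left] at h4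

theorem phiS_split (M : ℕ) :
    phiS (2 * M) = e2 (e2 (phiS M)) + 2 * X * e2 (e2 (e2 (psiS M))) := by
  induction M with
  | zero => simp [phiS, psiS]
  | succ M ih =>
    have h1 : phiS (2 * (M + 1)) = phiS (2 * M) + 2 * X ^ ((2 * M + 1) ^ 2)
        + 2 * X ^ ((2 * M + 2) ^ 2) := by
      rw [phiS, phiS, show 2 * (M + 1) = 2 * M + 1 + 1 by ring, sum_range_succ, sum_range_succ]
      ring
    have h2 : phiS (M + 1) = phiS M + 2 * X ^ ((M + 1) ^ 2) := by
      rw [phiS, phiS, sum_range_succ]; ring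
    have h3 : psiS (M + 1) = psiS M + X ^ tri M := by rw [psiS, psiS, sum_range_succ]
    rw [h1, h2, h3, ih]
    simp only [map_add, map_mul, map_pow, map_ofNat, e2_X, ← pow_mul]
    have e1 : (2 * M + 1) ^ 2 = 2 * 2 * 2 * tri M + 1 := by
      have := two_tri M
      zify; linarith
    rw [e1, show (2 * M + 2) ^ 2 = 2 * 2 * (M + 1) ^ 2 by ring]
    ring

theorem phi_split : phi = e2 (e2 phi) + 2 * X * e2 (e2 (e2 psi)) := by
  refine eq_of_dvd fun M => ?_
  have h0 := (pow_dvd_pow X (show M ≤ 2 * M by omega)).trans (phi_dvd (2 * M))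
  have h1 := (pow_dvd_pow X (show M ≤ 2 * (2 * M) by omega)).trans (e2_dvd (e2_dvd (phi_dvd M)))
  have h2 := (pow_dvd_pow X (show M ≤ 2 * (2 * (2 * M)) by omega)).trans
    (e2_dvd (e2_dvd (e2_dvd (psi_dvd M))))
  rw [phiS_split] at h0
  have := dvd_sub (dvd_sub h0 h1) (h2.mul_left (2 * X))
  refine this.trans (dvd_of_eq ?_)
  ring

theorem phi_sq : phi ^ 2 = e2 phi ^ 2 + 4 * X * e2 (e2 psi) ^ 2 := by
  have h1 : phim = e2 (e2 phi) - 2 * X * e2 (e2 (e2 psi)) := by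
    have := congrArg Ng phi_split
    rw [phi, Ng_Ng, ← phi] at this
    rw [this]
    simp only [map_add, map_mul, Ng_e2, map_ofNat, Ng_X]; ring
  have h2 := phi_mul_phim
  rw [h1] at h2
  nth_rewrite 1 [phi_split] at h2
  have h3 : e2 (e2 phi ^ 2 - 4 * X * e2 (e2 psi) ^ 2) = e2 (phim ^ 2) := by
    simp only [map_sub, map_mul, map_pow, map_ofNat, e2_X]
    rw [h1]
    linear_combination h2
  have h4 := congrArg Ng (e2_inj h3)
  simp only [map_sub, map_mul, map_pow, map_ofNat, Ng_X, Ng_e2] at h4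
  rw [← phi] at h4
  linear_combination -h4

/-- `1/φ(-q)` -/
def P : A := f2 * g ^ 2

theorem P_mul : P * phim = 1 := by
  rw [P, phim]; linear_combination (f * g) ^ 2 * fg2 + (f * g + 1) * fg

theorem P_eq : P = phi * e2 P ^ 2 := by
  have h1 : e2 P * e2 phim = 1 := by rw [← map_mul, P_mul, map_one]
  linear_combination phi * e2 P ^ 2 * P_mul - P * e2 P ^ 2 * phi_mul_phim
    - P * (e2 P * e2 phim + 1) * h1

theorem P_coeff (n : ℕ) : coeff (8 * n + 7) P = coeff n (64 * (psi ^ 7 * P ^ 8)) := by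
  have s1 : ∀ n, coeff (2 * n + 1) P = coeff n (2 * e2 (e2 psi) * P ^ 2) := by
    refine coeff_odd_of _ (e2 phi * P ^ 2) _ ?_
    simp only [map_mul, map_pow, map_ofNat]
    linear_combination P_eq + e2 P ^ 2 * phi_split
  have s2 : ∀ n, coeff (2 * n + 1) (2 * e2 (e2 psi) * P ^ 2) = coeff n (8 * e2 psi ^ 3 * P ^ 4) := by
    refine coeff_odd_of _ (2 * e2 psi * phi ^ 2 * P ^ 4) _ ?_
    simp only [map_mul, map_pow, map_ofNat]
    linear_combination 2 * e2 (e2 psi) * (P + phi * e2 P ^ 2) * P_eq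
      + 2 * e2 (e2 psi) * e2 P ^ 4 * phi_sq
  have h := congrArg e2 psi_sq
  simp only [map_mul, map_pow] at h
  have s3 : ∀ n, coeff (2 * n + 1) (8 * e2 psi ^ 3 * P ^ 4) = coeff n (64 * (psi ^ 7 * P ^ 8)) := by
    refine coeff_odd_of _ (8 * psi ^ 3 * (phi ^ 4 + 16 * X * e2 psi ^ 4) * P ^ 8) _ ?_
    simp only [map_mul, map_pow, map_ofNat, map_add, e2_X]
    have h4 : P ^ 4 = phi ^ 4 * e2 P ^ 8 := by
      nth_rewrite 1 [P_eq]; ring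
    have h5 : phi ^ 4 = (e2 phi ^ 2 + 4 * X * e2 (e2 psi) ^ 2) ^ 2 := by rw [← phi_sq]; ring
    rw [h4, h5]
    linear_combination -64 * X * e2 psi ^ 3 * e2 P ^ 8 * (e2 psi ^ 2 + e2 phi * e2 (e2 psi)) * h
  rw [show 8 * n + 7 = 2 * (2 * (2 * n + 1) + 1) + 1 by ring, s1, s2, s3]

end
end OP

end

section
open PowerSeries Finset
namespace OP
/-! ### The Jacobi identity for the cube of the Euler product -/
noncomputable section

theorem qb_map {B B' : Type*} [CommRing B] [CommRing B'] (h : B →+* B') (q : B) (N : ℕ) :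
    ∀ k, qb (h q) N k = h (qb q N k) := by
  induction N with
  | zero => intro k; cases k <;> simp [qb]
  | succ N ih => intro k; cases k <;> simp [qb, ih]

/-- sign times power -/
def cj (j : ℤ) : A := (((Int.negOnePow j : ℤˣ) : ℤ) : A) * X ^ tri j

theorem cj_neg (j : ℤ) : cj (-(j + 1)) = - cj j := by
  rw [cj, cj, tri_neg, Int.negOnePow_neg, Int.negOnePow_succ]; simp

theorem cj_a (n e : ℕ) : -X * X ^ n * cj (n - e) = X ^ e * cj (n - e + 1) := by
  rw [cj, cj, Int.negOnePow_succ]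
  have : (X : A) * X ^ n * X ^ tri (n - e) = X ^ e * X ^ tri (n - e + 1) := by
    rw [← pow_succ', ← pow_add, ← pow_add]
    congr 1
    have h1 := two_tri (n - e)
    have h2 := two_tri (n - e + 1)
    zify
    linarith
  push_cast
  linear_combination (-(((Int.negOnePow (n - e) : ℤˣ) : ℤ) : A)) * this

theorem cj_b (m e : ℕ) : - X ^ m * cj (e - m) = X ^ e * cj (e - m - 1) := by
  have hs : Int.negOnePow (e - m : ℤ) = - Int.negOnePow (e - m - 1 : ℤ) := by
    rw [← Int.negOnePow_succ]; congr 1; ring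
  rw [cj, cj, hs]
  have : (X : A) ^ m * X ^ tri (e - m) = X ^ e * X ^ tri (e - m - 1) := by
    rw [← pow_add, ← pow_add]
    congr 1
    have h1 := two_tri (e - m)
    have h2 := two_tri (e - m - 1)
    zify
    linarith
  push_cast
  linear_combination ((((Int.negOnePow (e - m - 1) : ℤˣ) : ℤ) : A)) * this

open TrivSqZeroExt in
theorem finite_jacobi (M : ℕ) :
    poch (X : A) (M + 1) * poch X M =
      ∑ k ∈ range (M + 1 + (M + 1) + 1),
        qb (X : A) (M + 1 + (M + 1)) k * ((((k : ℤ) - (M + 1 : ℕ) : ℤ) : A) * cj (k - (M + 1 : ℕ))) := by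
  have H := finite_jtp (B := TrivSqZeroExt A A) (inl X) (inl (-X) + inr (-X)) (inl (-1) + inr 1)
    (fun j => inl (cj j) + inr ((j : A) * cj j)) (by
      ext <;> simp [cj, tri_zero])
    (fun n e => by
      have h := cj_a n e
      simp only [inl_pow]
      refine TrivSqZeroExt.ext ?_ ?_
      · simpa using h
      · simp only [snd_mul, fst_mul, fst_add, snd_add, fst_inl, snd_inl, fst_inr, snd_inr,
          smul_eq_mul, MulOpposite.smul_eq_mul_unop, MulOpposite.unop_op]
        push_cast
        linear_combination ((n : A) - (e : A) + 1) * h)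
    (fun m e => by
      have h := cj_b m e
      simp only [inl_pow]
      refine TrivSqZeroExt.ext ?_ ?_
      · simpa using h
      · simp only [snd_mul, fst_mul, fst_add, snd_add, fst_inl, snd_inl, fst_inr, snd_inr,
          smul_eq_mul, MulOpposite.smul_eq_mul_unop, MulOpposite.unop_op]
        push_cast
        linear_combination ((e : A) - (m : A) - 1) * h) (M + 1) (M + 1)
  have hq : ∀ N k, qb (inl X : TrivSqZeroExt A A) N k = inl (qb X N k) := fun N k =>
    qb_map (inlHom A A) X N k
  have H2 := congrArg snd H
  rw [snd_sum, prod_range_succ' (fun i => (1 + (inl (-1) + inr 1) * inl X ^ i : TrivSqZeroExt A A)) M] at H2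
  have h3 : (1 + (inl (-1) + inr 1) * inl X ^ 0 : TrivSqZeroExt A A) = inr 1 := by
    ext <;> simp
  have hp1 : (∏ i ∈ range (M + 1), (1 + (inl (-X) + inr (-X)) * inl X ^ i : TrivSqZeroExt A A)).fst
      = poch X (M + 1) := by
    have := map_prod (fstHom A A A) (fun i => (1 + (inl (-X) + inr (-X)) * inl X ^ i : TrivSqZeroExt A A)) (range (M + 1))
    refine this.trans (prod_congr rfl fun i _ => ?_)
    simp [pow_succ', sub_eq_add_neg]
  have hp2 : (∏ i ∈ range M, (1 + (inl (-1) + inr 1) * inl X ^ (i + 1) : TrivSqZeroExt A A)).fst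
      = poch X M := by
    have := map_prod (fstHom A A A) (fun i => (1 + (inl (-1) + inr 1) * inl X ^ (i + 1) : TrivSqZeroExt A A)) (range M)
    refine this.trans (prod_congr rfl fun i _ => ?_)
    simp [sub_eq_add_neg]
  rw [h3, snd_mul, snd_mul, fst_mul, hp1, hp2] at H2
  simp only [fst_inr, snd_inr, smul_eq_mul, mul_one, MulOpposite.op_zero, zero_smul, add_zero, mul_zero] at H2
  rw [show poch (X : A) (M + 1) * poch X M = _ from by simpa using H2]
  refine sum_congr rfl fun k _ => ?_
  rw [hq]
  simp

theorem cube_dvd (M : ℕ) : (X : A) ^ (M + 1) ∣ f ^ 3 - ∑ j ∈ range (M + 1), (2 * j + 1 : A) * cj j := by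
  have L := theta_lim X f f_unit f_dvd (fun j => (j : A) * cj j) (M + 1) (fun j hj => by
    have := tri_W (M + 1) j ((j : A) * ((Int.negOnePow j : ℤˣ) : ℤ)) hj
    rwa [mul_assoc (j : A)] at this)
  rw [← finite_jacobi] at L
  have h1 := (pow_dvd_pow X (show M + 1 ≤ M + 1 + 1 by omega)).trans (f_dvd (M + 1))
  have h2 := (dvd_mul_sub h1 (f_dvd M)).mul_left f
  rw [mul_sub] at h2
  have h3 := dvd_trans_sub h2 L
  have h4 : (X : A) ^ (M + 1) ∣ (((M + 1 : ℕ) : ℤ) : A) * cj (M + 1 : ℕ) := by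
    rw [cj]
    have h : (X : A) ^ (M + 1) ∣ X ^ tri ((M + 1 : ℕ) : ℤ) := pow_dvd_pow _ (tri_ge (M + 1))
    exact (h.mul_left _).mul_left _
  have h5 := dvd_add h3 h4
  refine h5.trans (dvd_of_eq ?_)
  have : ∀ j ∈ range (M + 1), (((j : ℤ) : A) * cj j + (((-((j : ℤ) + 1)) : ℤ) : A) * cj (-((j : ℤ) + 1)))
      = (2 * j + 1 : A) * cj j := by
    intro j _
    rw [cj_neg]; push_cast; ring
  rw [sum_congr rfl this]
  ring

/-- Vanishing of coefficients of the cube. -/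
theorem cube_coeff (n : ℕ) (hn : n % 11 = 2 ∨ n % 11 = 4 ∨ n % 11 = 5 ∨ n % 11 = 7 ∨ n % 11 = 8 ∨ n % 11 = 9) :
    coeff n (f ^ 3) = 0 := by
  have h := X_pow_dvd_iff.1 (cube_dvd n) n (by omega)
  rw [map_sub, sub_eq_zero] at h
  rw [h, map_sum]
  refine sum_eq_zero fun j _ => ?_
  rw [show (2 * j + 1 : A) * cj j = C (((2 * j + 1 : ℕ) : ZMod 11) * (((Int.negOnePow j : ℤˣ) : ℤ) : ZMod 11)) * X ^ tri j by
    rw [cj, map_mul, map_natCast, map_intCast]; push_cast; ring]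
  rw [coeff_C_mul, coeff_X_pow]
  split_ifs with hj
  · have h2 := two_tri j
    rw [← hj] at h2
    have h2 := congrArg (fun t : ℤ => (t : ZMod 11)) h2
    push_cast at h2
    have key : ∀ a r : ZMod 11, (a = 2 ∨ a = 4 ∨ a = 5 ∨ a = 7 ∨ a = 8 ∨ a = 9) →
        2 * a = r * (r + 1) → 2 * r + 1 = 0 := by decide
    have hn' : (n : ZMod 11) = 2 ∨ (n : ZMod 11) = 4 ∨ (n : ZMod 11) = 5 ∨ (n : ZMod 11) = 7 ∨
        (n : ZMod 11) = 8 ∨ (n : ZMod 11) = 9 := by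
      rw [← ZMod.natCast_mod n 11]
      rcases hn with hn | hn | hn | hn | hn | hn <;> rw [hn] <;> decide
    have := key _ _ hn' h2
    push_cast
    rw [this]; simp
  · simp

/-- Vanishing of coefficients of the Euler product. -/
theorem f_coeff (n : ℕ) (hn : n % 11 = 3 ∨ n % 11 = 6 ∨ n % 11 = 8 ∨ n % 11 = 9 ∨ n % 11 = 10) :
    coeff n f = 0 := by
  apply coeff_pentagonalSeries_eq_zero
  rintro ⟨k, rfl⟩
  have h2 := two_mul_natCast_pentagonal k
  generalize pentagonal k = n at *
  have h2 := congrArg (fun t : ℤ => (t : ZMod 11)) h2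
  push_cast at h2
  have key : ∀ a r : ZMod 11, (a = 3 ∨ a = 6 ∨ a = 8 ∨ a = 9 ∨ a = 10) →
      2 * a ≠ r * (3 * r - 1) := by decide
  refine key _ _ ?_ h2
  rw [← ZMod.natCast_mod n 11]
  rcases hn with hn | hn | hn | hn | hn <;> rw [hn] <;> decide

end
end OP

end

section
open PowerSeries Finset
namespace OP
/-! ### The tenth power of the Euler product -/
noncomputable section

/-- The certificate: the class-six part of the tenth power lies in the ideal of relations. -/
theorem certificate {B : Type*} [CommRing B] (h11 : (11 : B) = 0) (z a b c d e J1 J4 J5 J9 J3 : B)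
    (j1 : J1 = 3*c*d^2 + 6*b*c*e + b^3 + 6*z*d*e + 3*z^2*a)
    (j4 : J4 = 3*d*e^2 + c^3 + 6*a*c*d + 6*z*a*e + 3*z^2*b)
    (j5 : J5 = d^3 + 6*b*d*e + 3*a^2*e + 6*z*a*b + 3*z^2*c)
    (j9 : J9 = e^3 + 6*a*c*e + 3*a*b^2 + 6*z*b*c + 3*z^2*d)
    (j3 : J3 = 3*b*c^2 + 6*a*b*d + a^3 + 6*z*c*d + 3*z^2*e)
    (h0 : 3*c*e^2 + 3*b*d^2 + 3*b^2*e + 3*a*c^2 + 3*a^2*d + z^3 = 0)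
    (h2 : 3*c^2*e + 3*b^2*c + 6*a*d*e + 6*z*b*d + 3*z*a^2 = 0)
    (h8 : 3*c^2*d + 3*a*d^2 + 6*a*b*e + 6*z*c*e + 3*z*b^2 = 0)
    (h10 : 3*d^2*e + 3*b*e^2 + 6*a*b*c + 3*z*c^2 + 6*z*a*d = 0)
    (h7 : 6*b*c*d + 3*a*e^2 + 3*a^2*c + 3*z*d^2 + 6*z*b*e = 0)
    (h6 : 6*c*d*e + 3*b^2*d + 3*a^2*b + 3*z*e^2 + 6*z*a*c = 0) :
    J1*(J1*(J4*c)) + J1*(J1*(J5*b)) + J1*(J1*(J9*z)) + J1*(J4*(J1*c)) + J1*(J4*(J5*a)) +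
    J1*(J4*(J3*e)) + J1*(J5*(J1*b)) + J1*(J5*(J4*a)) + J1*(J5*(J5*z)) + J1*(J9*(J1*z)) +
    J1*(J9*(J9*e)) + J1*(J9*(J3*d)) + J1*(J3*(J4*e)) + J1*(J3*(J9*d)) + J1*(J3*(J3*b)) +
    J4*(J1*(J1*c)) + J4*(J1*(J5*a)) + J4*(J1*(J3*e)) + J4*(J4*(J5*d)) + J4*(J4*(J9*c)) +
    J4*(J4*(J3*z)) + J4*(J5*(J1*a)) + J4*(J5*(J4*d)) + J4*(J5*(J9*b)) + J4*(J9*(J4*c)) +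
    J4*(J9*(J5*b)) + J4*(J9*(J9*z)) + J4*(J3*(J1*e)) + J4*(J3*(J4*z)) + J4*(J3*(J3*a)) +
    J5*(J1*(J1*b)) + J5*(J1*(J4*a)) + J5*(J1*(J5*z)) + J5*(J4*(J1*a)) + J5*(J4*(J4*d)) +
    J5*(J4*(J9*b)) + J5*(J5*(J1*z)) + J5*(J5*(J9*e)) + J5*(J5*(J3*d)) + J5*(J9*(J4*b)) +
    J5*(J9*(J5*e)) + J5*(J9*(J3*c)) + J5*(J3*(J5*d)) + J5*(J3*(J9*c)) + J5*(J3*(J3*z)) +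
    J9*(J1*(J1*z)) + J9*(J1*(J9*e)) + J9*(J1*(J3*d)) + J9*(J4*(J4*c)) + J9*(J4*(J5*b)) +
    J9*(J4*(J9*z)) + J9*(J5*(J4*b)) + J9*(J5*(J5*e)) + J9*(J5*(J3*c)) + J9*(J9*(J1*e)) +
    J9*(J9*(J4*z)) + J9*(J9*(J3*a)) + J9*(J3*(J1*d)) + J9*(J3*(J5*c)) + J9*(J3*(J9*a)) +
    J3*(J1*(J4*e)) + J3*(J1*(J9*d)) + J3*(J1*(J3*b)) + J3*(J4*(J1*e)) + J3*(J4*(J4*z)) +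
    J3*(J4*(J3*a)) + J3*(J5*(J5*d)) + J3*(J5*(J9*c)) + J3*(J5*(J3*z)) + J3*(J9*(J1*d)) +
    J3*(J9*(J5*c)) + J3*(J9*(J9*a)) + J3*(J3*(J1*b)) + J3*(J3*(J4*a)) + J3*(J3*(J5*z)) = 0 := by
  subst j1 j4 j5 j9 j3
  linear_combination
    (1*(3*c*d^2 + 6*b*c*e + b^3 + 6*z*d*e + 3*z^2*a)*(3*c*d^2 + 6*b*c*e + b^3 + 6*z*d*e + 3*z^2*a)*d
    + 8*(3*c*d^2 + 6*b*c*e + b^3 + 6*z*d*e + 3*z^2*a)*(d^3 + 6*b*d*e + 3*a^2*e + 6*z*a*b +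
    3*z^2*c)*c + 1*(3*d*e^2 + c^3 + 6*a*c*d + 6*z*a*e + 3*z^2*b)*(3*d*e^2 + c^3 + 6*a*c*d + 6*z*a*e
    + 3*z^2*b)*e + 8*(3*d*e^2 + c^3 + 6*a*c*d + 6*z*a*e + 3*z^2*b)*(e^3 + 6*a*c*e + 3*a*b^2 +
    6*z*b*c + 3*z^2*d)*d + 1*(d^3 + 6*b*d*e + 3*a^2*e + 6*z*a*b + 3*z^2*c)*(d^3 + 6*b*d*e + 3*a^2*e
    + 6*z*a*b + 3*z^2*c)*a + 8*(d^3 + 6*b*d*e + 3*a^2*e + 6*z*a*b + 3*z^2*c)*(3*b*c^2 + 6*a*b*d +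
    a^3 + 6*z*c*d + 3*z^2*e)*e + 1*(e^3 + 6*a*c*e + 3*a*b^2 + 6*z*b*c + 3*z^2*d)*(e^3 + 6*a*c*e +
    3*a*b^2 + 6*z*b*c + 3*z^2*d)*b + 8*(e^3 + 6*a*c*e + 3*a*b^2 + 6*z*b*c + 3*z^2*d)*(3*c*d^2 +
    6*b*c*e + b^3 + 6*z*d*e + 3*z^2*a)*a + 1*(3*b*c^2 + 6*a*b*d + a^3 + 6*z*c*d + 3*z^2*e)*(3*b*c^2
    + 6*a*b*d + a^3 + 6*z*c*d + 3*z^2*e)*c + 8*(3*b*c^2 + 6*a*b*d + a^3 + 6*z*c*d +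
    3*z^2*e)*(3*d*e^2 + c^3 + 6*a*c*d + 6*z*a*e + 3*z^2*b)*b)*h0 + (3*(3*c*d^2 + 6*b*c*e + b^3 +
    6*z*d*e + 3*z^2*a)*(3*b*c^2 + 6*a*b*d + a^3 + 6*z*c*d + 3*z^2*e)*c + 1*(3*c*d^2 + 6*b*c*e + b^3
    + 6*z*d*e + 3*z^2*a)*(3*d*e^2 + c^3 + 6*a*c*d + 6*z*a*e + 3*z^2*b)*b + 3*(3*c*d^2 + 6*b*c*e +
    b^3 + 6*z*d*e + 3*z^2*a)*(d^3 + 6*b*d*e + 3*a^2*e + 6*z*a*b + 3*z^2*c)*e + 10*(3*b*c^2 + 6*a*b*d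
    + a^3 + 6*z*c*d + 3*z^2*e)*(3*b*c^2 + 6*a*b*d + a^3 + 6*z*c*d + 3*z^2*e)*e + 7*(3*b*c^2 +
    6*a*b*d + a^3 + 6*z*c*d + 3*z^2*e)*(d^3 + 6*b*d*e + 3*a^2*e + 6*z*a*b + 3*z^2*c)*a + 5*(3*d*e^2
    + c^3 + 6*a*c*d + 6*z*a*e + 3*z^2*b)*(3*d*e^2 + c^3 + 6*a*c*d + 6*z*a*e + 3*z^2*b)*a +
    6*(3*d*e^2 + c^3 + 6*a*c*d + 6*z*a*e + 3*z^2*b)*(d^3 + 6*b*d*e + 3*a^2*e + 6*z*a*b +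
    3*z^2*c)*z)*h2 + (3*(3*d*e^2 + c^3 + 6*a*c*d + 6*z*a*e + 3*z^2*b)*(3*c*d^2 + 6*b*c*e + b^3 +
    6*z*d*e + 3*z^2*a)*d + 1*(3*d*e^2 + c^3 + 6*a*c*d + 6*z*a*e + 3*z^2*b)*(d^3 + 6*b*d*e + 3*a^2*e
    + 6*z*a*b + 3*z^2*c)*c + 3*(3*d*e^2 + c^3 + 6*a*c*d + 6*z*a*e + 3*z^2*b)*(e^3 + 6*a*c*e +
    3*a*b^2 + 6*z*b*c + 3*z^2*d)*a + 10*(3*c*d^2 + 6*b*c*e + b^3 + 6*z*d*e + 3*z^2*a)*(3*c*d^2 +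
    6*b*c*e + b^3 + 6*z*d*e + 3*z^2*a)*a + 7*(3*c*d^2 + 6*b*c*e + b^3 + 6*z*d*e + 3*z^2*a)*(e^3 +
    6*a*c*e + 3*a*b^2 + 6*z*b*c + 3*z^2*d)*b + 5*(d^3 + 6*b*d*e + 3*a^2*e + 6*z*a*b + 3*z^2*c)*(d^3
    + 6*b*d*e + 3*a^2*e + 6*z*a*b + 3*z^2*c)*b + 6*(d^3 + 6*b*d*e + 3*a^2*e + 6*z*a*b +
    3*z^2*c)*(e^3 + 6*a*c*e + 3*a*b^2 + 6*z*b*c + 3*z^2*d)*z)*h8 + (3*(d^3 + 6*b*d*e + 3*a^2*e +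
    6*z*a*b + 3*z^2*c)*(3*d*e^2 + c^3 + 6*a*c*d + 6*z*a*e + 3*z^2*b)*e + 1*(d^3 + 6*b*d*e + 3*a^2*e
    + 6*z*a*b + 3*z^2*c)*(e^3 + 6*a*c*e + 3*a*b^2 + 6*z*b*c + 3*z^2*d)*d + 3*(d^3 + 6*b*d*e +
    3*a^2*e + 6*z*a*b + 3*z^2*c)*(3*b*c^2 + 6*a*b*d + a^3 + 6*z*c*d + 3*z^2*e)*b + 10*(3*d*e^2 + c^3
    + 6*a*c*d + 6*z*a*e + 3*z^2*b)*(3*d*e^2 + c^3 + 6*a*c*d + 6*z*a*e + 3*z^2*b)*b + 7*(3*d*e^2 +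
    c^3 + 6*a*c*d + 6*z*a*e + 3*z^2*b)*(3*b*c^2 + 6*a*b*d + a^3 + 6*z*c*d + 3*z^2*e)*c + 5*(e^3 +
    6*a*c*e + 3*a*b^2 + 6*z*b*c + 3*z^2*d)*(e^3 + 6*a*c*e + 3*a*b^2 + 6*z*b*c + 3*z^2*d)*c + 6*(e^3
    + 6*a*c*e + 3*a*b^2 + 6*z*b*c + 3*z^2*d)*(3*b*c^2 + 6*a*b*d + a^3 + 6*z*c*d + 3*z^2*e)*z)*h10 +
    (3*(e^3 + 6*a*c*e + 3*a*b^2 + 6*z*b*c + 3*z^2*d)*(d^3 + 6*b*d*e + 3*a^2*e + 6*z*a*b + 3*z^2*c)*a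
    + 1*(e^3 + 6*a*c*e + 3*a*b^2 + 6*z*b*c + 3*z^2*d)*(3*b*c^2 + 6*a*b*d + a^3 + 6*z*c*d +
    3*z^2*e)*e + 3*(e^3 + 6*a*c*e + 3*a*b^2 + 6*z*b*c + 3*z^2*d)*(3*c*d^2 + 6*b*c*e + b^3 + 6*z*d*e
    + 3*z^2*a)*c + 10*(d^3 + 6*b*d*e + 3*a^2*e + 6*z*a*b + 3*z^2*c)*(d^3 + 6*b*d*e + 3*a^2*e +
    6*z*a*b + 3*z^2*c)*c + 7*(d^3 + 6*b*d*e + 3*a^2*e + 6*z*a*b + 3*z^2*c)*(3*c*d^2 + 6*b*c*e + b^3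
    + 6*z*d*e + 3*z^2*a)*d + 5*(3*b*c^2 + 6*a*b*d + a^3 + 6*z*c*d + 3*z^2*e)*(3*b*c^2 + 6*a*b*d +
    a^3 + 6*z*c*d + 3*z^2*e)*d + 6*(3*b*c^2 + 6*a*b*d + a^3 + 6*z*c*d + 3*z^2*e)*(3*c*d^2 + 6*b*c*e
    + b^3 + 6*z*d*e + 3*z^2*a)*z)*h7 + (3*(3*b*c^2 + 6*a*b*d + a^3 + 6*z*c*d + 3*z^2*e)*(e^3 +
    6*a*c*e + 3*a*b^2 + 6*z*b*c + 3*z^2*d)*b + 1*(3*b*c^2 + 6*a*b*d + a^3 + 6*z*c*d +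
    3*z^2*e)*(3*c*d^2 + 6*b*c*e + b^3 + 6*z*d*e + 3*z^2*a)*a + 3*(3*b*c^2 + 6*a*b*d + a^3 + 6*z*c*d
    + 3*z^2*e)*(3*d*e^2 + c^3 + 6*a*c*d + 6*z*a*e + 3*z^2*b)*d + 10*(e^3 + 6*a*c*e + 3*a*b^2 +
    6*z*b*c + 3*z^2*d)*(e^3 + 6*a*c*e + 3*a*b^2 + 6*z*b*c + 3*z^2*d)*d + 7*(e^3 + 6*a*c*e + 3*a*b^2
    + 6*z*b*c + 3*z^2*d)*(3*d*e^2 + c^3 + 6*a*c*d + 6*z*a*e + 3*z^2*b)*e + 5*(3*c*d^2 + 6*b*c*e +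
    b^3 + 6*z*d*e + 3*z^2*a)*(3*c*d^2 + 6*b*c*e + b^3 + 6*z*d*e + 3*z^2*a)*e + 6*(3*c*d^2 + 6*b*c*e
    + b^3 + 6*z*d*e + 3*z^2*a)*(3*d*e^2 + c^3 + 6*a*c*d + 6*z*a*e + 3*z^2*b)*z)*h6 + (-
    36*c^3*d^5*e^2 - 33*a*c^4*d^5 - 342*z*a*c^3*d^4*e - 261*z^2*b*c^3*d^4 - 216*b*c^3*d^3*e^3 -
    12*b*c^6*d^2*e - 291*a*b*c^4*d^3*e - 2673*z*a*b*c^3*d^2*e^2 - 1395*z^2*b^2*c^3*d^2*e -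
    615*b^3*c^2*d^3*e^2 - 36*b^3*c^5*d^2 - 216*a*b^3*c^3*d^3 - 2673*z*a*b^3*c^2*d^2*e -
    225*z^2*b^4*c^2*d^2 - 213*z*c^2*d^4*e^3 - 39*z*c^5*d^3*e - 1395*z^2*a*c^2*d^3*e^2 -
    1161*z^3*b*c^2*d^3*e - 99*z^2*a*c^5*d^2 - 360*z^2*a^2*c^3*d^3 - 1323*z^3*a^2*c^2*d^2*e -
    630*z^4*a*b*c^2*d^2 - 270*b^2*c^3*d*e^4 - 39*b^2*c^6*e^2 - 666*a*b^2*c^4*d*e^2 -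
    828*z*a*b^2*c^3*e^3 - 360*z^2*b^3*c^3*e^2 - 231*b^4*c^2*d*e^3 - 33*b^4*c^5*e - 291*a*b^4*c^3*d*e
    - 756*z*a*b^4*c^2*e^2 - 99*z^2*b^5*c^2*e - 729*z*b*c^2*d^2*e^4 - 234*z*b*c^5*d*e^2 -
    2898*z^2*a*b*c^2*d*e^3 - 1323*z^3*b^2*c^2*d*e^2 - 261*z^2*a*b*c^5*e - 2898*z^2*a^2*b*c^3*d*e -
    1323*z^3*a^2*b*c^2*e^2 - 630*z^4*a*b^2*c^2*e - 21*b^6*c*d*e^2 - 12*a*b^6*c^2*d - 126*z*a*b^6*c*e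
    - 9*z^2*b^7*c - 828*z*b^3*c*d^2*e^3 - 342*z*b^3*c^4*d*e - 2898*z^2*a*b^3*c*d*e^2 -
    372*z^3*b^4*c*d*e - 261*z^2*a*b^3*c^4 - 1395*z^2*a^2*b^3*c^2*d - 1161*z^3*a^2*b^3*c*e -
    147*z^4*a*b^4*c - 261*z^2*c*d^3*e^4 - 225*z^2*c^4*d^2*e^2 - 1161*z^3*a*c*d^2*e^3 -
    630*z^4*b*c*d^2*e^2 - 372*z^3*a*c^4*d*e - 630*z^4*a^2*c*d*e^2 - 90*z^5*a*b*c*d*e -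
    54*z^4*a^2*c^4 - 222*z^4*a^3*c^2*d - 159*z^5*a^3*c*e - 24*b*c^2*d^7 - 234*b^2*c^2*d^5*e -
    666*a^2*b*c^2*d^4*e - 729*z*a*b^2*c^2*d^4 - 2835*a^2*b^2*c^2*d^2*e^2 - 6*b^4*c*d^5 -
    39*b^5*c*d^3*e - 666*a^2*b^4*c*d^2*e - 234*z*a*b^5*c*d^2 - 126*z*b*c*d^6*e - 756*z*b^2*c*d^4*e^2
    - 2673*z*a^2*b*c*d^3*e^2 - 2898*z^2*a*b^2*c*d^3*e - 261*z^2*a*b*c*d^5 - 2898*z^2*a^3*b*c*d^2*e -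
    1323*z^3*a^2*b^2*c*d^2 - 615*a^2*b^3*c^2*e^3 - 234*a^2*b^5*c*e^2 - 2673*z*a^2*b^2*c*d*e^3 -
    1395*z^2*a^3*b^2*c*e^2 - 24*a^2*b^7*e - 6*z*a*b^8 - 30*z*b^4*d^4*e - 81*z*b^5*d^2*e^2 -
    729*z*a^2*b^4*d*e^2 - 261*z^2*a*b^5*d*e - 180*z^2*a*b^4*d^3 - 261*z^2*a^3*b^4*e - 57*z^3*a^2*b^5
    - 99*z^2*b*d^5*e^2 - 360*z^2*b^2*d^3*e^3 - 1395*z^2*a^2*b*d^2*e^3 - 1323*z^3*a*b^2*d^2*e^2 -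
    372*z^3*a*b*d^4*e - 1161*z^3*a^3*b*d*e^2 - 630*z^4*a^2*b^2*d*e - 222*z^4*a^2*b*d^3 -
    147*z^4*a^4*b*e - 12*z^5*a^3*b^2 - 57*z^3*c^2*d^5 - 277*z^3*b^3*c*d^3 - 147*z^4*c*d^4*e -
    159*z^5*a*c*d^3 - 81*z*b^2*c^2*e^5 - 30*z*b^4*c*e^4 - 261*z^2*b*c*d*e^5 - 372*z^3*a*b*c*e^4 -
    3*z*b^6*e^3 - 14*z^3*b^6*d - 180*z^2*b^3*d*e^4 - 222*z^4*b^3*d^2*e - 277*z^3*a*b^3*e^3 -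
    159*z^5*a*b^3*d - 57*z^3*d^2*e^5 - 12*z^5*d^3*e^2 - 147*z^4*a*d*e^4 - 12*z^5*a^2*e^3 -
    12*a*c*d^6*e^2 - 291*a*b*c*d^4*e^3 - 216*a^3*c*d^3*e^3 - 231*a^3*c^4*d^2*e - 756*z*a^2*b*c^4*d^2
    - 39*a^2*c^2*d^6 - 270*a^4*c^2*d^3*e - 828*z*a^3*b*c^2*d^3 - 234*z*a^2*c*d^5*e -
    729*z*a^4*c*d^2*e^2 - 666*a*b^2*c*d^2*e^4 - 291*a^3*b*c*d*e^4 - 270*a^3*b*c^4*e^2 -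
    729*z*a^2*b^2*c^4*e - 666*a^4*b*c^2*d*e^2 - 2673*z*a^3*b^2*c^2*d*e - 342*z*a^4*b*c*e^3 -
    231*a*b^3*d^4*e^2 - 270*a*b^4*d^2*e^3 - 216*a^3*b^3*d*e^3 - 216*a^3*b^3*c^3*e -
    213*z*a^2*b^4*c^3 - 270*a^2*b^3*c*d^4 - 291*a^4*b^3*c*d*e - 342*z*a^3*b^4*c*d -
    828*z*a^2*b^3*d^3*e - 213*z*a^4*b^3*e^2 - 39*z*a*d^5*e^3 - 342*z*a*b*d^3*e^4 - 213*z*a^3*d^2*e^4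
    - 828*z*a^3*c^3*d*e^2 - 225*z^2*a^2*d^4*e^2 - 261*z^2*a^4*d*e^3 - 180*z^2*a^4*c^3*e -
    277*z^3*a^3*b*c^3 - 180*z^2*a^3*c*d^4 - 261*z^2*a^5*c*d*e - 372*z^3*a^4*b*c*d -
    277*z^3*a^3*d^3*e - 57*z^3*a^5*e^2 - 180*z^2*b*c^4*e^3 - 222*z^4*b^2*c*e^3 - 54*z^4*b^4*e^2 -
    277*z^3*c^3*d*e^3 - 159*z^5*b*d*e^3 - 222*z^4*a*c^3*e^2 - 6*z*c*d^8 - 12*z^5*c^3*d^2 -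
    159*z^5*b*c^3*e - 3*z*b^3*d^6 - 12*z^5*b^3*c^2 - 9*z^2*d^7*e - 14*z^3*a*d^6 - 24*c*d^2*e^7 -
    234*a*c^2*d^2*e^5 - 615*a^2*c^3*d^2*e^3 - 21*a*b*c^2*e^6 - 39*a*b^3*c*e^5 - 231*a^2*b*c^3*e^4 -
    6*a*b^5*e^4 - 6*z*d*e^8 - 126*z*a*c*d*e^6 - 234*z*a*b^2*d*e^5 - 756*z*a^2*c^2*d*e^4 -
    9*z^2*a*e^7 - 99*z^2*a^2*c*e^5 - 225*z^2*a^2*b^2*e^4 - 360*z^2*a^3*c^2*e^3 - 231*a^4*b^2*c*d^3 -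
    213*z*b^2*c^4*d^3 - 39*a^2*b^6*d^2 - 33*a^4*b^5*d - 39*z*b^5*c^3*d - 360*z^2*a^3*b^3*d^2 -
    756*z*a^4*b^2*d^2*e - 99*z^2*a^5*b^2*d - 1161*z^3*a*b^2*c^3*d - 54*z^4*a^4*d^2 -
    615*a^3*b^2*c^3*d^2 - 21*a^6*b*c*d^2 - 12*a^6*b^2*c*e - 36*a^3*b^5*c^2 - 126*z*a^6*b*d*e -
    225*z^2*a^4*b^2*c^2 - 9*z^2*a^7*b - 33*b*d^4*e^5 - 36*a^2*d^3*e^5 - 21*a^2*c^6*d*e -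
    126*z*a*b*c^6*d - 9*z^2*c^7*d - 147*z^4*b*c^4*d - 54*z^4*b^2*d^4 - 6*c^4*d*e^5 - 39*a*c^5*d*e^3
    - 24*a*b^2*c^7 - 6*z*b*c^8 - 234*a^2*b^2*c^5*d - 30*z*a*c^4*e^4 - 81*z*a^2*c^5*e^2 -
    57*z^3*b^2*c^5 - 3*z*a^3*c^6 - 14*z^3*c^6*e - 30*z*a^4*c^4*d - 81*z*a^5*c^2*d^2 - 39*b^2*d^2*e^6
    - 12*a^2*b*d*e^6 - 39*z*a^3*b*e^5 - 3*z*c^3*e^6 - 14*z^3*b*e^6 - 615*a^3*b^2*d^3*e^2 -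
    234*a^5*b*d^2*e^2 - 24*a^7*d*e^2 - 6*a^4*b*c^5 - 39*a^5*b*c^3*d - 234*z*a^5*b*c^2*e - 6*z*a^8*e
    - 21*a*b^2*d^6*e - 33*a^5*c*e^4 - 36*a^5*b^2*e^3 - 54*z^4*c^2*e^4 - 39*a^3*b*d^5*e - 6*a^5*d^4*e
    - 81*z*a^2*b^2*d^5 - 30*z*a^4*b*d^4 - 39*a^6*c^2*e^2 - 39*z*a^5*b^3*c - 3*z*a^6*d^3 -
    14*z^3*a^6*c)*h11

/-- The part of a series with exponents in a given class modulo eleven. -/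
def comp (c : ZMod 11) (h : A) : A := PowerSeries.mk fun n => if (n : ZMod 11) = c then coeff n h else 0

theorem coeff_comp (c : ZMod 11) (h : A) (n : ℕ) :
    coeff n (comp c h) = if (n : ZMod 11) = c then coeff n h else 0 := coeff_mk _ _

theorem comp_mul (c : ZMod 11) (u v : A) :
    comp c (u * v) = ∑ a : ZMod 11, comp a u * comp (c - a) v := by
  ext n
  rw [coeff_comp, map_sum, coeff_mul]
  simp only [coeff_mul, coeff_comp]
  rw [sum_comm]
  have : ∀ p ∈ antidiagonal n, (∑ a : ZMod 11, (if (p.1 : ZMod 11) = a then coeff p.1 u else 0) *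
      (if (p.2 : ZMod 11) = c - a then coeff p.2 v else 0)) =
      if (n : ZMod 11) = c then coeff p.1 u * coeff p.2 v else 0 := by
    intro p hp
    have hp := mem_antidiagonal.1 hp
    rw [sum_eq_single (p.1 : ZMod 11)]
    · have : ((p.2 : ZMod 11) = c - p.1) ↔ (n : ZMod 11) = c := by
        rw [← hp]; push_cast
        constructor
        · intro h; rw [h]; ring
        · intro h; rw [← h]; ring
      simp only [this]
      split_ifs <;> simp
    · intro a _ ha
      rw [if_neg (Ne.symm ha), zero_mul]
    · simp
  rw [sum_congr rfl this]
  split_ifs <;> simp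

theorem sum_eleven (t : ZMod 11 → A) : ∑ a, t a =
    t 0 + t 1 + t 2 + t 3 + t 4 + t 5 + t 6 + t 7 + t 8 + t 9 + t 10 := by
  have h : ∀ t : Fin 11 → A, ∑ a, t a =
      t 0 + t 1 + t 2 + t 3 + t 4 + t 5 + t 6 + t 7 + t 8 + t 9 + t 10 := by
    intro t
    simp only [Fin.sum_univ_succ, Fin.sum_univ_zero]
    simp only [← add_assoc, add_zero]
    rfl
  exact h t

theorem comp_zero {h : A} {c : ZMod 11} (H : ∀ n : ℕ, n % 11 = c.val → coeff n h = 0) :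
    comp c h = 0 := by
  ext n
  rw [coeff_comp]
  split_ifs with hn
  · rw [H n (by rw [← hn, ZMod.val_natCast])]; simp
  · simp

theorem comp_f_3 : comp 3 f = 0 := comp_zero fun n hn => f_coeff n (by change n % 11 = 3 at hn; omega)
theorem comp_f_6 : comp 6 f = 0 := comp_zero fun n hn => f_coeff n (by change n % 11 = 6 at hn; omega)
theorem comp_f_8 : comp 8 f = 0 := comp_zero fun n hn => f_coeff n (by change n % 11 = 8 at hn; omega)
theorem comp_f_9 : comp 9 f = 0 := comp_zero fun n hn => f_coeff n (by change n % 11 = 9 at hn; omega)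
theorem comp_f_10 : comp 10 f = 0 := comp_zero fun n hn => f_coeff n (by change n % 11 = 10 at hn; omega)
theorem comp_cube_2 : comp 2 (f ^ 3) = 0 := comp_zero fun n hn => cube_coeff n (by change n % 11 = 2 at hn; omega)
theorem comp_cube_4 : comp 4 (f ^ 3) = 0 := comp_zero fun n hn => cube_coeff n (by change n % 11 = 4 at hn; omega)
theorem comp_cube_5 : comp 5 (f ^ 3) = 0 := comp_zero fun n hn => cube_coeff n (by change n % 11 = 5 at hn; omega)
theorem comp_cube_7 : comp 7 (f ^ 3) = 0 := comp_zero fun n hn => cube_coeff n (by change n % 11 = 7 at hn; omega)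
theorem comp_cube_8 : comp 8 (f ^ 3) = 0 := comp_zero fun n hn => cube_coeff n (by change n % 11 = 8 at hn; omega)
theorem comp_cube_9 : comp 9 (f ^ 3) = 0 := comp_zero fun n hn => cube_coeff n (by change n % 11 = 9 at hn; omega)

theorem conv_f (c : ZMod 11) (u : A) : comp c (f * u) =
    comp 0 f * comp (c - 0) u + comp 1 f * comp (c - 1) u + comp 2 f * comp (c - 2) u + comp 4 f * comp (c - 4) u + comp 5 f * comp (c - 5) u + comp 7 f * comp (c - 7) u := by
  rw [comp_mul, sum_eleven, comp_f_3, comp_f_6, comp_f_8, comp_f_9, comp_f_10]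
  ring

theorem conv_cube (c : ZMod 11) (u : A) : comp c (f ^ 3 * u) =
    comp 0 (f ^ 3) * comp (c - 0) u + comp 1 (f ^ 3) * comp (c - 1) u + comp 3 (f ^ 3) * comp (c - 3) u + comp 6 (f ^ 3) * comp (c - 6) u + comp 10 (f ^ 3) * comp (c - 10) u := by
  rw [comp_mul, sum_eleven, comp_cube_2, comp_cube_4, comp_cube_5, comp_cube_7, comp_cube_8, comp_cube_9]
  ring

theorem sub_facts :
    ((0 : ZMod 11) - 0 = 0) ∧ ((0 : ZMod 11) - 1 = 10) ∧ ((0 : ZMod 11) - 2 = 9) ∧ ((0 : ZMod 11) -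
    3 = 8) ∧ ((0 : ZMod 11) - 4 = 7) ∧ ((0 : ZMod 11) - 5 = 6) ∧ ((0 : ZMod 11) - 6 = 5) ∧ ((0 :
    ZMod 11) - 7 = 4) ∧ ((0 : ZMod 11) - 10 = 1) ∧ ((1 : ZMod 11) - 0 = 1) ∧ ((1 : ZMod 11) - 1 = 0)
    ∧ ((1 : ZMod 11) - 2 = 10) ∧ ((1 : ZMod 11) - 3 = 9) ∧ ((1 : ZMod 11) - 4 = 8) ∧ ((1 : ZMod 11)
    - 5 = 7) ∧ ((1 : ZMod 11) - 6 = 6) ∧ ((1 : ZMod 11) - 7 = 5) ∧ ((1 : ZMod 11) - 10 = 2) ∧ ((2 :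
    ZMod 11) - 0 = 2) ∧ ((2 : ZMod 11) - 1 = 1) ∧ ((2 : ZMod 11) - 2 = 0) ∧ ((2 : ZMod 11) - 3 = 10)
    ∧ ((2 : ZMod 11) - 4 = 9) ∧ ((2 : ZMod 11) - 5 = 8) ∧ ((2 : ZMod 11) - 6 = 7) ∧ ((2 : ZMod 11) -
    7 = 6) ∧ ((2 : ZMod 11) - 10 = 3) ∧ ((3 : ZMod 11) - 0 = 3) ∧ ((3 : ZMod 11) - 1 = 2) ∧ ((3 :
    ZMod 11) - 2 = 1) ∧ ((3 : ZMod 11) - 3 = 0) ∧ ((3 : ZMod 11) - 4 = 10) ∧ ((3 : ZMod 11) - 5 = 9)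
    ∧ ((3 : ZMod 11) - 6 = 8) ∧ ((3 : ZMod 11) - 7 = 7) ∧ ((3 : ZMod 11) - 10 = 4) ∧ ((4 : ZMod 11)
    - 0 = 4) ∧ ((4 : ZMod 11) - 1 = 3) ∧ ((4 : ZMod 11) - 2 = 2) ∧ ((4 : ZMod 11) - 3 = 1) ∧ ((4 :
    ZMod 11) - 4 = 0) ∧ ((4 : ZMod 11) - 5 = 10) ∧ ((4 : ZMod 11) - 6 = 9) ∧ ((4 : ZMod 11) - 7 = 8)
    ∧ ((4 : ZMod 11) - 10 = 5) ∧ ((5 : ZMod 11) - 0 = 5) ∧ ((5 : ZMod 11) - 1 = 4) ∧ ((5 : ZMod 11)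
    - 2 = 3) ∧ ((5 : ZMod 11) - 3 = 2) ∧ ((5 : ZMod 11) - 4 = 1) ∧ ((5 : ZMod 11) - 5 = 0) ∧ ((5 :
    ZMod 11) - 6 = 10) ∧ ((5 : ZMod 11) - 7 = 9) ∧ ((5 : ZMod 11) - 10 = 6) ∧ ((6 : ZMod 11) - 0 =
    6) ∧ ((6 : ZMod 11) - 1 = 5) ∧ ((6 : ZMod 11) - 2 = 4) ∧ ((6 : ZMod 11) - 3 = 3) ∧ ((6 : ZMod
    11) - 4 = 2) ∧ ((6 : ZMod 11) - 5 = 1) ∧ ((6 : ZMod 11) - 6 = 0) ∧ ((6 : ZMod 11) - 7 = 10) ∧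
    ((6 : ZMod 11) - 10 = 7) ∧ ((7 : ZMod 11) - 0 = 7) ∧ ((7 : ZMod 11) - 1 = 6) ∧ ((7 : ZMod 11) -
    2 = 5) ∧ ((7 : ZMod 11) - 3 = 4) ∧ ((7 : ZMod 11) - 4 = 3) ∧ ((7 : ZMod 11) - 5 = 2) ∧ ((7 :
    ZMod 11) - 6 = 1) ∧ ((7 : ZMod 11) - 7 = 0) ∧ ((7 : ZMod 11) - 10 = 8) ∧ ((8 : ZMod 11) - 0 = 8)
    ∧ ((8 : ZMod 11) - 1 = 7) ∧ ((8 : ZMod 11) - 2 = 6) ∧ ((8 : ZMod 11) - 3 = 5) ∧ ((8 : ZMod 11) -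
    4 = 4) ∧ ((8 : ZMod 11) - 5 = 3) ∧ ((8 : ZMod 11) - 6 = 2) ∧ ((8 : ZMod 11) - 7 = 1) ∧ ((8 :
    ZMod 11) - 10 = 9) ∧ ((9 : ZMod 11) - 0 = 9) ∧ ((9 : ZMod 11) - 1 = 8) ∧ ((9 : ZMod 11) - 2 = 7)
    ∧ ((9 : ZMod 11) - 3 = 6) ∧ ((9 : ZMod 11) - 4 = 5) ∧ ((9 : ZMod 11) - 5 = 4) ∧ ((9 : ZMod 11) -
    6 = 3) ∧ ((9 : ZMod 11) - 7 = 2) ∧ ((9 : ZMod 11) - 10 = 10) ∧ ((10 : ZMod 11) - 0 = 10) ∧ ((10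
    : ZMod 11) - 1 = 9) ∧ ((10 : ZMod 11) - 2 = 8) ∧ ((10 : ZMod 11) - 3 = 7) ∧ ((10 : ZMod 11) - 4
    = 6) ∧ ((10 : ZMod 11) - 5 = 5) ∧ ((10 : ZMod 11) - 6 = 4) ∧ ((10 : ZMod 11) - 7 = 3) ∧ ((10 :
    ZMod 11) - 10 = 0) := by
  and_intros <;> rfl

theorem comp_f_sq (k : ZMod 11) : comp k (f * f) =
    comp 0 f * comp (k - 0) f + comp 1 f * comp (k - 1) f + comp 2 f * comp (k - 2) f + comp 4 f * comp (k - 4) f + comp 5 f * comp (k - 5) f + comp 7 f * comp (k - 7) f := conv_f k f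

theorem cube_comp_0 : comp 0 (f ^ 3) =
    3*(comp 7 f)*(comp 2 f)^2 + 6*(comp 0 f)*(comp 7 f)*(comp 4 f) + (comp 0 f)^3 + 6*(comp 5
    f)*(comp 2 f)*(comp 4 f) + 3*(comp 5 f)^2*(comp 1 f) := by
  rw [show f ^ 3 = f * (f * f) by ring]
  simp only [conv_f, sub_facts, comp_f_3, comp_f_6, comp_f_8, comp_f_9, comp_f_10]
  ring

theorem cube_comp_1 : comp 1 (f ^ 3) =
    (comp 4 f)^3 + 6*(comp 7 f)*(comp 4 f)*(comp 1 f) + 3*(comp 0 f)^2*(comp 1 f) + 6*(comp 5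
    f)*(comp 0 f)*(comp 7 f) + 3*(comp 5 f)^2*(comp 2 f) := by
  rw [show f ^ 3 = f * (f * f) by ring]
  simp only [conv_f, sub_facts, comp_f_3, comp_f_6, comp_f_8, comp_f_9, comp_f_10]
  ring

theorem cube_comp_2 : comp 2 (f ^ 3) =
    6*(comp 7 f)*(comp 2 f)*(comp 4 f) + 3*(comp 0 f)*(comp 1 f)^2 + 3*(comp 0 f)^2*(comp 2 f) +
    3*(comp 5 f)*(comp 4 f)^2 + 6*(comp 5 f)*(comp 7 f)*(comp 1 f) := by
  rw [show f ^ 3 = f * (f * f) by ring]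
  simp only [conv_f, sub_facts, comp_f_3, comp_f_6, comp_f_8, comp_f_9, comp_f_10]
  ring

theorem cube_comp_3 : comp 3 (f ^ 3) =
    (comp 1 f)^3 + 6*(comp 0 f)*(comp 2 f)*(comp 1 f) + 3*(comp 0 f)*(comp 7 f)^2 + 6*(comp 5
    f)*(comp 7 f)*(comp 2 f) + 3*(comp 5 f)^2*(comp 4 f) := by
  rw [show f ^ 3 = f * (f * f) by ring]
  simp only [conv_f, sub_facts, comp_f_3, comp_f_6, comp_f_8, comp_f_9, comp_f_10]
  ring

theorem cube_comp_4 : comp 4 (f ^ 3) =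
    3*(comp 2 f)*(comp 1 f)^2 + 3*(comp 7 f)*(comp 4 f)^2 + 3*(comp 7 f)^2*(comp 1 f) + 3*(comp 0
    f)*(comp 2 f)^2 + 3*(comp 0 f)^2*(comp 4 f) + (comp 5 f)^3 := by
  rw [show f ^ 3 = f * (f * f) by ring]
  simp only [conv_f, sub_facts, comp_f_3, comp_f_6, comp_f_8, comp_f_9, comp_f_10]
  ring

theorem cube_comp_5 : comp 5 (f ^ 3) =
    3*(comp 2 f)^2*(comp 1 f) + 3*(comp 7 f)^2*(comp 2 f) + 6*(comp 0 f)*(comp 4 f)*(comp 1 f) +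
    6*(comp 5 f)*(comp 7 f)*(comp 4 f) + 3*(comp 5 f)*(comp 0 f)^2 := by
  rw [show f ^ 3 = f * (f * f) by ring]
  simp only [conv_f, sub_facts, comp_f_3, comp_f_6, comp_f_8, comp_f_9, comp_f_10]
  ring

theorem cube_comp_6 : comp 6 (f ^ 3) =
    3*(comp 4 f)*(comp 1 f)^2 + (comp 2 f)^3 + 6*(comp 0 f)*(comp 2 f)*(comp 4 f) + 6*(comp 5
    f)*(comp 0 f)*(comp 1 f) + 3*(comp 5 f)^2*(comp 7 f) := by
  rw [show f ^ 3 = f * (f * f) by ring]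
  simp only [conv_f, sub_facts, comp_f_3, comp_f_6, comp_f_8, comp_f_9, comp_f_10]
  ring

theorem cube_comp_7 : comp 7 (f ^ 3) =
    6*(comp 2 f)*(comp 4 f)*(comp 1 f) + 3*(comp 7 f)^2*(comp 4 f) + 3*(comp 0 f)^2*(comp 7 f) +
    3*(comp 5 f)*(comp 1 f)^2 + 6*(comp 5 f)*(comp 0 f)*(comp 2 f) := by
  rw [show f ^ 3 = f * (f * f) by ring]
  simp only [conv_f, sub_facts, comp_f_3, comp_f_6, comp_f_8, comp_f_9, comp_f_10]
  ring

theorem cube_comp_8 : comp 8 (f ^ 3) =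
    3*(comp 2 f)^2*(comp 4 f) + 3*(comp 0 f)*(comp 4 f)^2 + 6*(comp 0 f)*(comp 7 f)*(comp 1 f) +
    6*(comp 5 f)*(comp 2 f)*(comp 1 f) + 3*(comp 5 f)*(comp 7 f)^2 := by
  rw [show f ^ 3 = f * (f * f) by ring]
  simp only [conv_f, sub_facts, comp_f_3, comp_f_6, comp_f_8, comp_f_9, comp_f_10]
  ring

theorem cube_comp_9 : comp 9 (f ^ 3) =
    3*(comp 4 f)^2*(comp 1 f) + 3*(comp 7 f)*(comp 1 f)^2 + 6*(comp 0 f)*(comp 7 f)*(comp 2 f) +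
    3*(comp 5 f)*(comp 2 f)^2 + 6*(comp 5 f)*(comp 0 f)*(comp 4 f) := by
  rw [show f ^ 3 = f * (f * f) by ring]
  simp only [conv_f, sub_facts, comp_f_3, comp_f_6, comp_f_8, comp_f_9, comp_f_10]
  ring

theorem cube_comp_10 : comp 10 (f ^ 3) =
    3*(comp 2 f)*(comp 4 f)^2 + 6*(comp 7 f)*(comp 2 f)*(comp 1 f) + (comp 7 f)^3 + 6*(comp 5
    f)*(comp 4 f)*(comp 1 f) + 3*(comp 5 f)^2*(comp 0 f) := by
  rw [show f ^ 3 = f * (f * f) by ring]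
  simp only [conv_f, sub_facts, comp_f_3, comp_f_6, comp_f_8, comp_f_9, comp_f_10]
  ring

theorem ten_expand (Q : A) (hc : ∀ (c : ZMod 11) (u : A), comp c (Q * u) =
    comp 0 Q * comp (c - 0) u + comp 1 Q * comp (c - 1) u + comp 3 Q * comp (c - 3) u + comp 6 Q * comp (c - 6) u + comp 10 Q * comp (c - 10) u) :
    comp 6 (Q * (Q * (Q * f))) =
    comp 10 Q*(comp 10 Q*(comp 6 Q*comp 2 f)) + comp 10 Q*(comp 10 Q*(comp 1 Q*comp 7 f)) + comp 10
    Q*(comp 10 Q*(comp 3 Q*comp 5 f)) + comp 10 Q*(comp 6 Q*(comp 10 Q*comp 2 f)) + comp 10 Q*(comp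
    6 Q*(comp 1 Q*comp 0 f)) + comp 10 Q*(comp 6 Q*(comp 0 Q*comp 1 f)) + comp 10 Q*(comp 1 Q*(comp
    10 Q*comp 7 f)) + comp 10 Q*(comp 1 Q*(comp 6 Q*comp 0 f)) + comp 10 Q*(comp 1 Q*(comp 1 Q*comp
    5 f)) + comp 10 Q*(comp 3 Q*(comp 10 Q*comp 5 f)) + comp 10 Q*(comp 3 Q*(comp 3 Q*comp 1 f)) +
    comp 10 Q*(comp 3 Q*(comp 0 Q*comp 4 f)) + comp 10 Q*(comp 0 Q*(comp 6 Q*comp 1 f)) + comp 10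
    Q*(comp 0 Q*(comp 3 Q*comp 4 f)) + comp 10 Q*(comp 0 Q*(comp 0 Q*comp 7 f)) + comp 6 Q*(comp 10
    Q*(comp 10 Q*comp 2 f)) + comp 6 Q*(comp 10 Q*(comp 1 Q*comp 0 f)) + comp 6 Q*(comp 10 Q*(comp 0
    Q*comp 1 f)) + comp 6 Q*(comp 6 Q*(comp 1 Q*comp 4 f)) + comp 6 Q*(comp 6 Q*(comp 3 Q*comp 2 f))
    + comp 6 Q*(comp 6 Q*(comp 0 Q*comp 5 f)) + comp 6 Q*(comp 1 Q*(comp 10 Q*comp 0 f)) + comp 6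
    Q*(comp 1 Q*(comp 6 Q*comp 4 f)) + comp 6 Q*(comp 1 Q*(comp 3 Q*comp 7 f)) + comp 6 Q*(comp 3
    Q*(comp 6 Q*comp 2 f)) + comp 6 Q*(comp 3 Q*(comp 1 Q*comp 7 f)) + comp 6 Q*(comp 3 Q*(comp 3
    Q*comp 5 f)) + comp 6 Q*(comp 0 Q*(comp 10 Q*comp 1 f)) + comp 6 Q*(comp 0 Q*(comp 6 Q*comp 5
    f)) + comp 6 Q*(comp 0 Q*(comp 0 Q*comp 0 f)) + comp 1 Q*(comp 10 Q*(comp 10 Q*comp 7 f)) + comp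
    1 Q*(comp 10 Q*(comp 6 Q*comp 0 f)) + comp 1 Q*(comp 10 Q*(comp 1 Q*comp 5 f)) + comp 1 Q*(comp
    6 Q*(comp 10 Q*comp 0 f)) + comp 1 Q*(comp 6 Q*(comp 6 Q*comp 4 f)) + comp 1 Q*(comp 6 Q*(comp 3
    Q*comp 7 f)) + comp 1 Q*(comp 1 Q*(comp 10 Q*comp 5 f)) + comp 1 Q*(comp 1 Q*(comp 3 Q*comp 1
    f)) + comp 1 Q*(comp 1 Q*(comp 0 Q*comp 4 f)) + comp 1 Q*(comp 3 Q*(comp 6 Q*comp 7 f)) + comp 1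
    Q*(comp 3 Q*(comp 1 Q*comp 1 f)) + comp 1 Q*(comp 3 Q*(comp 0 Q*comp 2 f)) + comp 1 Q*(comp 0
    Q*(comp 1 Q*comp 4 f)) + comp 1 Q*(comp 0 Q*(comp 3 Q*comp 2 f)) + comp 1 Q*(comp 0 Q*(comp 0
    Q*comp 5 f)) + comp 3 Q*(comp 10 Q*(comp 10 Q*comp 5 f)) + comp 3 Q*(comp 10 Q*(comp 3 Q*comp 1
    f)) + comp 3 Q*(comp 10 Q*(comp 0 Q*comp 4 f)) + comp 3 Q*(comp 6 Q*(comp 6 Q*comp 2 f)) + comp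
    3 Q*(comp 6 Q*(comp 1 Q*comp 7 f)) + comp 3 Q*(comp 6 Q*(comp 3 Q*comp 5 f)) + comp 3 Q*(comp 1
    Q*(comp 6 Q*comp 7 f)) + comp 3 Q*(comp 1 Q*(comp 1 Q*comp 1 f)) + comp 3 Q*(comp 1 Q*(comp 0
    Q*comp 2 f)) + comp 3 Q*(comp 3 Q*(comp 10 Q*comp 1 f)) + comp 3 Q*(comp 3 Q*(comp 6 Q*comp 5
    f)) + comp 3 Q*(comp 3 Q*(comp 0 Q*comp 0 f)) + comp 3 Q*(comp 0 Q*(comp 10 Q*comp 4 f)) + comp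
    3 Q*(comp 0 Q*(comp 1 Q*comp 2 f)) + comp 3 Q*(comp 0 Q*(comp 3 Q*comp 0 f)) + comp 0 Q*(comp 10
    Q*(comp 6 Q*comp 1 f)) + comp 0 Q*(comp 10 Q*(comp 3 Q*comp 4 f)) + comp 0 Q*(comp 10 Q*(comp 0
    Q*comp 7 f)) + comp 0 Q*(comp 6 Q*(comp 10 Q*comp 1 f)) + comp 0 Q*(comp 6 Q*(comp 6 Q*comp 5
    f)) + comp 0 Q*(comp 6 Q*(comp 0 Q*comp 0 f)) + comp 0 Q*(comp 1 Q*(comp 1 Q*comp 4 f)) + comp 0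
    Q*(comp 1 Q*(comp 3 Q*comp 2 f)) + comp 0 Q*(comp 1 Q*(comp 0 Q*comp 5 f)) + comp 0 Q*(comp 3
    Q*(comp 10 Q*comp 4 f)) + comp 0 Q*(comp 3 Q*(comp 1 Q*comp 2 f)) + comp 0 Q*(comp 3 Q*(comp 3
    Q*comp 0 f)) + comp 0 Q*(comp 0 Q*(comp 10 Q*comp 7 f)) + comp 0 Q*(comp 0 Q*(comp 6 Q*comp 0
    f)) + comp 0 Q*(comp 0 Q*(comp 1 Q*comp 5 f)) := by
  simp only [hc, sub_facts, comp_f_3, comp_f_6, comp_f_8, comp_f_9, comp_f_10]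
  ring

theorem eleven_zero : (11 : A) = 0 := by
  have : ((11 : ZMod 11)) = 0 := by decide
  have h := congrArg (C (R := ZMod 11)) this
  rwa [map_zero, map_ofNat] at h

theorem comp_ten : comp 6 (f ^ 10) = 0 := by
  rw [show f ^ 10 = f ^ 3 * (f ^ 3 * (f ^ 3 * f)) by ring]
  rw [ten_expand (f ^ 3) conv_cube]
  exact certificate eleven_zero (comp 5 f) (comp 0 f) (comp 7 f) (comp 2 f) (comp 4 f) (comp 1 f) (comp 10 (f ^ 3)) (comp 6 (f ^ 3)) (comp 1 (f ^ 3)) (comp 3 (f ^ 3)) (comp 0 (f ^ 3))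
    cube_comp_10 cube_comp_6 cube_comp_1 cube_comp_3 cube_comp_0
    (cube_comp_4.symm.trans comp_cube_4) (cube_comp_5.symm.trans comp_cube_5) (cube_comp_8.symm.trans comp_cube_8) (cube_comp_9.symm.trans comp_cube_9) (cube_comp_2.symm.trans comp_cube_2) (cube_comp_7.symm.trans comp_cube_7)

theorem ten_coeff (n : ℕ) (hn : n % 11 = 6) : coeff n (f ^ 10) = 0 := by
  have h := congrArg (coeff n) comp_ten
  rw [coeff_comp, if_pos, map_zero] at h
  · exact h
  · rw [← ZMod.natCast_mod n 11, hn]; rfl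

end
end OP
end

section
open PowerSeries Finset
namespace OP
/-! ### Conclusion -/
noncomputable section

theorem pow_eleven_coeff (u : A) (n : ℕ) (hn : ¬ 11 ∣ n) : coeff n (u ^ 11) = 0 := by
  have h : (u.expand 11 (by norm_num)).map (frobenius (ZMod 11) 11) = u ^ 11 :=
    MvPowerSeries.map_frobenius_expand 11 (by norm_num)
  rw [← h, coeff_map, coeff_expand_of_not_dvd _ _ _ hn, map_zero]

theorem main_coeff (n : ℕ) : coeff (11 * n + 6) (64 * (psi ^ 7 * P ^ 8)) = 0 := by
  have e : psi ^ 7 * P ^ 8 = (f2 ^ 2 * g ^ 3) ^ 11 * f ^ 10 := by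
    have : (f * g) ^ 10 = 1 := by rw [fg, one_pow]
    rw [psi, P]
    linear_combination (- f2 ^ 22 * g ^ 23) * this
  have h0 : coeff (11 * n + 6) (psi ^ 7 * P ^ 8) = 0 := by
    rw [e, coeff_mul]
    refine sum_eq_zero fun p hp => ?_
    have hp := mem_antidiagonal.1 hp
    by_cases h : 11 ∣ p.1
    · rw [ten_coeff p.2 (by omega), mul_zero]
    · rw [pow_eleven_coeff _ _ h, zero_mul]
  rw [show (64 : A) = C 64 by rw [map_ofNat], coeff_C_mul, h0, mul_zero]

theorem P_zero (n : ℕ) : coeff (11 * (8 * n + 5)) P = 0 := by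
  rw [show 11 * (8 * n + 5) = 8 * (11 * n + 6) + 7 by ring, P_coeff, main_coeff]

/-- generating function of partitions into distinct parts -/
def Dg : A := PowerSeries.mk fun n => ((Nat.Partition.distincts n).card : ZMod 11)

/-- generating function of partitions -/
def Gg : A := PowerSeries.mk fun n => (Fintype.card (Nat.Partition n) : ZMod 11)

open PowerSeries.WithPiTopology in
theorem Gg_mul : Gg * f = 1 := by
  let _ : TopologicalSpace (ZMod 11) := ⊥
  have : DiscreteTopology (ZMod 11) := ⟨rfl⟩
  have h1 := Nat.Partition.hasProd_powerSeriesMk_card_restricted (ZMod 11) (fun _ => True)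
  have h2 := hasProd_one_sub_X_pow (ZMod 11)
  have h3 := h1.mul h2
  have e : (PowerSeries.mk fun n => ((Nat.Partition.restricted n (fun _ => True)).card : ZMod 11)) = Gg := by
    rw [Gg]; congr 1; ext n
    simp [Nat.Partition.restricted]
  rw [e] at h3
  refine h3.unique ?_
  have ef : (fun i : ℕ => (if True then ∑' (j : ℕ), (X : A) ^ ((i + 1) * j) else 1) * (1 - X ^ (i + 1)))
      = fun _ => 1 := by
    funext i
    rw [if_pos trivial]
    simp only [pow_mul]
    exact tsum_pow_mul_one_sub_of_constantCoeff_eq_zero (by simp)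
  rw [ef]
  exact hasProd_one

open PowerSeries.WithPiTopology in
theorem Dg_mul : Dg * f = f2 := by
  let _ : TopologicalSpace (ZMod 11) := ⊥
  have : DiscreteTopology (ZMod 11) := ⟨rfl⟩
  have h1 := Nat.Partition.hasProd_powerSeriesMk_card_countRestricted (ZMod 11) (m := 2) (by norm_num)
  have h2 := hasProd_one_sub_X_pow (ZMod 11)
  have h3 := h1.mul h2
  simp only [Nat.Partition.countRestricted_two] at h3
  refine h3.unique ?_
  have h4 : HasProd (fun n : ℕ => e2 (1 - X ^ (n + 1))) (e2 f) := by
    rw [HasProd, tendsto_iff_coeff_tendsto] at h2 ⊢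
    intro n
    simp only [← map_prod]
    rcases Nat.even_or_odd' n with ⟨k, rfl | rfl⟩
    · simp only [e2_coeff_even]; exact h2 k
    · simp only [e2_coeff_odd]; exact tendsto_const_nhds
  have ef : (fun i : ℕ => (∑ j ∈ range 2, (X : A) ^ ((i + 1) * j)) * (1 - X ^ (i + 1)))
      = fun n => e2 (1 - X ^ (n + 1)) := by
    funext i
    rw [map_sub, map_one, map_pow, e2_X]
    simp only [sum_range_succ, sum_range_zero]
    ring
  rw [ef]
  exact h4

theorem P_eq_DG : P = Dg * Gg := by
  have hg : Gg = g := f_unit.mul_left_cancel (by rw [fg, mul_comm, Gg_mul])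
  have hd : Dg = f2 * g := by
    rw [← Dg_mul, mul_assoc, fg, mul_one]
  rw [hd, hg, P]; ring

theorem P_coeff_eq (n : ℕ) : coeff n P = ((∑ k ∈ Finset.range (n + 1),
    (Nat.Partition.distincts k).card * Fintype.card (Nat.Partition (n - k)) : ℕ) : ZMod 11) := by
  rw [P_eq_DG, coeff_mul, Finset.Nat.sum_antidiagonal_eq_sum_range_succ_mk]
  push_cast
  refine sum_congr rfl fun k _ => ?_
  simp [Dg, Gg]

end
end OP

end

theorem overpartition_eleven_congruence (n : ℕ) :
    11 ∣ overpartition (11 * (8 * n + 5)) := by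
  have h := (OP.P_coeff_eq (11 * (8 * n + 5))).symm.trans (OP.P_zero n)
  exact (ZMod.natCast_eq_zero_iff _ _).1 h
end

section
/- For every integer n ≥ 0, the number of overpartitions of 13·2^6·(8n+7) is divisible by 13, i.e. p̄(832(8n+7)) ≡ 0 (mod 13). -/
open PowerSeries

namespace OverThirteen

abbrev K := ZMod 13
instance : Fact (Nat.Prime 13) := ⟨by norm_num⟩
abbrev R := PowerSeries K

/-- integers with square `n` -/
noncomputable def S (n : ℕ) : Finset ℤ := (Finset.Icc (-(n : ℤ)) n).filter (fun x => x ^ 2 = n)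

lemma mem_S (n : ℕ) (x : ℤ) : x ∈ S n ↔ x ^ 2 = n := by
  simp only [S, Finset.mem_filter, Finset.mem_Icc, and_iff_right_iff_imp]
  intro h
  constructor <;> nlinarith [sq_nonneg (x - 1), sq_nonneg (x + 1), sq_nonneg x, Int.le_self_sq x, Int.le_self_sq (-x)]

/-- pairs of integers with square sum `n` -/
noncomputable def S2 (n : ℕ) : Finset (ℤ × ℤ) :=
  ((Finset.Icc (-(n : ℤ)) n) ×ˢ (Finset.Icc (-(n : ℤ)) n)).filter
    (fun x => x.1 ^ 2 + x.2 ^ 2 = n)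

lemma mem_S2 (n : ℕ) (x : ℤ × ℤ) : x ∈ S2 n ↔ x.1 ^ 2 + x.2 ^ 2 = n := by
  simp only [S2, Finset.mem_filter, Finset.mem_product, Finset.mem_Icc, and_iff_right_iff_imp]
  intro h
  have h1 := sq_nonneg x.1
  have h2 := sq_nonneg x.2
  have h3 := Int.le_self_sq x.1
  have h4 := Int.le_self_sq (-x.1)
  have h5 := Int.le_self_sq x.2
  have h6 := Int.le_self_sq (-x.2)
  rw [neg_sq] at h4 h6
  refine ⟨⟨?_, ?_⟩, ?_, ?_⟩ <;> linarith

noncomputable def th (w : ℤ → K) : R := PowerSeries.mk fun n => ∑ x ∈ S n, w x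

lemma coeff_th_mul (w v : ℤ → K) (n : ℕ) :
    coeff n (th w * th v) = ∑ x ∈ S2 n, w x.1 * v x.2 := by
  rw [coeff_mul]
  simp only [th, coeff_mk, Finset.sum_mul_sum, ← Finset.sum_product']
  rw [Finset.sum_sigma']
  refine Finset.sum_bij' (fun p _ => p.2)
    (fun x _ => ⟨((x.1 ^ 2).toNat, (x.2 ^ 2).toNat), x⟩) ?_ ?_ ?_ ?_ ?_
  · rintro ⟨⟨i, j⟩, x⟩ h
    simp only [Finset.mem_sigma, Finset.HasAntidiagonal.mem_antidiagonal, Finset.mem_product, mem_S, mem_S2] at h ⊢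
    rw [h.2.1, h.2.2, ← h.1]; push_cast; rfl
  · rintro x h
    simp only [Finset.mem_sigma, Finset.HasAntidiagonal.mem_antidiagonal, Finset.mem_product, mem_S, mem_S2] at h ⊢
    have h1 := sq_nonneg x.1
    have h2 := sq_nonneg x.2
    refine ⟨?_, ?_, ?_⟩ <;> omega
  · rintro ⟨⟨i, j⟩, x⟩ h
    simp only [Finset.mem_sigma, Finset.HasAntidiagonal.mem_antidiagonal, Finset.mem_product, mem_S, mem_S2] at h ⊢
    rw [h.2.1, h.2.2]; simp
  · intros; rfl
  · intros; rfl

def sg (x : ℤ) : K := if Even x then 1 else -1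

noncomputable def a : R := th (fun _ => 1)
noncomputable def b : R := th sg
noncomputable abbrev E2 : R →ₐ[K] R := expand 2 (by norm_num)
noncomputable abbrev E4 : R →ₐ[K] R := expand 4 (by norm_num)
noncomputable abbrev E13 : R →ₐ[K] R := expand 13 (by norm_num)
noncomputable abbrev N : R →+* R := rescale (-1 : K)

lemma sum_S2_two (n : ℕ) (f : ℤ × ℤ → K) :
    ∑ x ∈ S2 (2 * n), f x = ∑ x ∈ S2 n, f (x.1 + x.2, x.1 - x.2) := by
  symm
  refine Finset.sum_bij' (fun x _ => (x.1 + x.2, x.1 - x.2))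
    (fun x _ => ((x.1 + x.2) / 2, (x.1 - x.2) / 2)) ?_ ?_ ?_ ?_ ?_
  · intro x h
    rw [mem_S2] at h ⊢
    push_cast; linear_combination 2 * h
  · intro x h
    rw [mem_S2] at h ⊢
    have hp : Even (x.1 ^ 2 + x.2 ^ 2) := ⟨n, by rw [h]; push_cast; ring⟩
    have hq : Even (x.1 + x.2) := by
      simpa [Int.even_add, Int.even_pow] using hp
    obtain ⟨u, hu⟩ := hq
    have e1 : (x.1 + x.2) / 2 = u := by omega
    have e2 : (x.1 - x.2) / 2 = u - x.2 := by omega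
    simp only [e1, e2]
    have : x.1 = 2 * u - x.2 := by omega
    rw [this] at h
    push_cast at h
    linarith
  · intro x h; ext <;> simp <;> omega
  · intro x h
    rw [mem_S2] at h
    have hp : Even (x.1 ^ 2 + x.2 ^ 2) := ⟨n, by rw [h]; push_cast; ring⟩
    have hq : Even (x.1 + x.2) := by
      simpa [Int.even_add, Int.even_pow] using hp
    obtain ⟨u, hu⟩ := hq
    ext <;> simp <;> omega
  · intros; rfl

lemma sg_eq (n : ℕ) (x : ℤ × ℤ) (h : x ∈ S2 n) : sg (x.1 + x.2) = (-1) ^ n := by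
  rw [mem_S2] at h
  have : Even (x.1 + x.2) ↔ Even n := by
    rw [← Int.even_coe_nat, ← h]; simp [Int.even_add, Int.even_pow]
  unfold sg
  by_cases hn : Even n
  · simp [this, hn]
  · simp [this, hn, (Nat.not_even_iff_odd.mp hn).neg_one_pow]

lemma sg_add (x y : ℤ) : sg (x + y) = sg x * sg y := by
  unfold sg
  by_cases hx : Even x <;> by_cases hy : Even y <;> simp [Int.even_add, hx, hy]

lemma sg_sub (x y : ℤ) : sg (x - y) = sg x * sg y := by
  unfold sg
  by_cases hx : Even x <;> by_cases hy : Even y <;> simp [Int.even_sub, hx, hy]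

lemma two_ne : (2 : K) ≠ 0 := by decide

lemma landen1 : 2 * (E2 a) ^ 2 = a ^ 2 + b ^ 2 := by
  rw [← map_pow]; simp only [pow_two]
  ext n
  have h2 : (2 : R) = C (2 : K) := (map_ofNat C 2).symm
  rw [h2, coeff_C_mul, coeff_expand, map_add]
  simp only [a, b, coeff_th_mul]
  have e1 : ∀ m, ∑ x ∈ S2 m, sg x.1 * sg x.2 = ∑ x ∈ S2 m, (-1) ^ m := fun m =>
    Finset.sum_congr rfl fun x hx => by rw [← sg_add, sg_eq m x hx]
  rw [e1]
  split_ifs with h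
  · obtain ⟨m, rfl⟩ := h
    rw [sum_S2_two, sum_S2_two]
    simp
    ring
  · have : Odd n := by rwa [← Nat.not_even_iff_odd, even_iff_two_dvd]
    simp [this.neg_one_pow]

lemma landen2 : (E2 b) ^ 2 = a * b := by
  rw [← map_pow, pow_two]
  ext n
  rw [coeff_expand]
  simp only [a, b, coeff_th_mul]
  split_ifs with h
  · obtain ⟨m, rfl⟩ := h
    rw [sum_S2_two]
    simp [sg_sub]
  · have ho : Odd n := by rwa [← Nat.not_even_iff_odd, even_iff_two_dvd]
    have e : ∑ x ∈ S2 n, 1 * sg x.2 = ∑ x ∈ S2 n, 1 * sg x.1 := by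
      refine Finset.sum_bij' (fun x _ => x.swap) (fun x _ => x.swap) ?_ ?_ ?_ ?_ ?_
      · intro x h; rw [mem_S2] at h ⊢; simp; linarith
      · intro x h; rw [mem_S2] at h ⊢; simp; linarith
      · intros; simp
      · intros; simp
      · intros; simp
    have e2 : ∑ x ∈ S2 n, 1 * sg x.2 = - ∑ x ∈ S2 n, 1 * sg x.1 := by
      rw [← Finset.sum_neg_distrib]
      refine Finset.sum_congr rfl fun x hx => ?_
      have := sg_eq n x hx
      rw [sg_add, ho.neg_one_pow] at this
      have h1 : sg x.1 = 1 ∨ sg x.1 = -1 := by unfold sg; split_ifs <;> simp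
      rcases h1 with h1 | h1 <;> rw [h1] at this ⊢ <;> first | linear_combination this | linear_combination -this
    have e3 : 2 * ∑ x ∈ S2 n, 1 * sg x.2 = 0 := by linear_combination e + e2
    exact ((mul_eq_zero.mp e3).resolve_left two_ne).symm

lemma coeff_b (n : ℕ) : coeff n b = (-1) ^ n * coeff n a := by
  simp only [a, b, th, coeff_mk, Finset.mul_sum]
  refine Finset.sum_congr rfl fun x hx => ?_
  have := sg_eq n (x, 0) (by rw [mem_S2]; rw [mem_S] at hx; simpa using hx)
  simpa using this

lemma N_a : N a = b := by
  ext n; rw [coeff_rescale, coeff_b]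

lemma N_b : N b = a := by
  ext n; rw [coeff_rescale, coeff_b, ← mul_assoc, ← mul_pow]; simp

lemma coeff_a_zero_of (n : ℕ) (h : ∀ x : ℤ, x ^ 2 ≠ n) : coeff n a = 0 := by
  simp only [a, th, coeff_mk]
  apply Finset.sum_eq_zero
  intro x hx
  exact absurd ((mem_S n x).mp hx) (h x)

lemma coeff_a_four (n : ℕ) : coeff (4 * n) a = coeff n a := by
  simp only [a, th, coeff_mk]
  symm
  refine Finset.sum_bij' (fun x _ => 2 * x) (fun x _ => x / 2) ?_ ?_ ?_ ?_ ?_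
  · intro x h; rw [mem_S] at h ⊢; push_cast; rw [← h]; ring
  · intro x h
    rw [mem_S] at h ⊢
    have : Even (x ^ 2) := by rw [h]; exact ⟨2 * n, by push_cast; ring⟩
    obtain ⟨u, hu⟩ := (Int.even_pow.mp this).1
    have : x / 2 = u := by omega
    rw [this]; subst hu; push_cast at h; linarith
  · intro x h; simp
  · intro x h
    rw [mem_S] at h
    have : Even (x ^ 2) := by rw [h]; exact ⟨2 * n, by push_cast; ring⟩
    obtain ⟨u, hu⟩ := (Int.even_pow.mp this).1
    omega
  · intros; rfl

lemma S_zero : S 0 = {0} := by decide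
lemma S_one : S 1 = {-1, 1} := by decide
lemma a0 : constantCoeff a = 1 := by
  rw [← coeff_zero_eq_constantCoeff_apply]; simp [a, th, S_zero]
lemma b0 : constantCoeff b = 1 := by
  rw [← coeff_zero_eq_constantCoeff_apply, coeff_b]; simp [a0]
lemma a1 : coeff 1 a = 2 := by
  simp [a, th, S_one]
lemma b1 : coeff 1 b = -2 := by
  rw [coeff_b, a1]; ring

end OverThirteen

open PowerSeries

namespace OverThirteen

noncomputable def U (m : ℕ) : R →ₗ[K] R where
  toFun f := PowerSeries.mk fun n => coeff (m * n) f
  map_add' f g := by ext n; simp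
  map_smul' c f := by ext n; simp

lemma coeff_U (m n : ℕ) (f : R) : coeff n (U m f) = coeff (m * n) f := by
  simp [U]

lemma U_mul (m : ℕ) (hm : m ≠ 0) (g f : R) : U m (expand m hm g * f) = g * U m f := by
  ext n
  rw [coeff_U, coeff_mul, coeff_mul]
  symm
  refine Finset.sum_of_injOn (fun p => (m * p.1, m * p.2)) ?_ ?_ ?_ ?_
  · rintro ⟨x1, x2⟩ _ ⟨y1, y2⟩ _ h
    simpa [hm] using h
  · rintro ⟨x1, x2⟩ h
    simp only [Finset.mem_coe, Finset.HasAntidiagonal.mem_antidiagonal] at h ⊢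
    rw [← h]; ring
  · rintro ⟨x1, x2⟩ h h'
    rw [coeff_expand]
    split_ifs with hd
    · exfalso
      apply h'
      obtain ⟨y, rfl⟩ := hd
      simp only [Finset.HasAntidiagonal.mem_antidiagonal] at h
      have : m ∣ x2 := by
        rw [← Nat.dvd_add_right (Dvd.intro y rfl : m ∣ m * y), h]; exact Dvd.intro n rfl
      obtain ⟨z, rfl⟩ := this
      refine ⟨(y, z), ?_, rfl⟩
      simp only [Finset.mem_coe, Finset.HasAntidiagonal.mem_antidiagonal]
      apply Nat.eq_of_mul_eq_mul_left (Nat.pos_of_ne_zero hm)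
      rw [← h]; ring
    · simp
  · rintro ⟨x1, x2⟩ h
    simp [coeff_U]

lemma frob (f : R) : E13 f = f ^ 13 := by
  have h := MvPowerSeries.map_frobenius_expand (R := K) (σ := Unit) 13 (f := f) (by norm_num)
  rw [← h]
  have : frobenius K 13 = RingHom.id K := by
    ext x; simp [frobenius_def]
  rw [this]
  rfl

lemma U13_pow_mul (g f : R) : U 13 (g ^ 13 * f) = g * U 13 f := by
  rw [← frob]; exact U_mul 13 _ g f

lemma U13_E2 (f : R) : U 13 (E2 f) = E2 (U 13 f) := by
  ext n
  rw [coeff_U, coeff_expand, coeff_expand, coeff_U]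
  by_cases h : 2 ∣ n
  · obtain ⟨m, rfl⟩ := h
    have : 13 * (2 * m) / 2 = 13 * m := by omega
    have h2 : 2 ∣ 13 * (2 * m) := ⟨13 * m, by ring⟩
    simp [this, h2]
  · have : ¬ 2 ∣ 13 * n := by omega
    simp [h, this]

lemma U13_N (f : R) : U 13 (N f) = N (U 13 f) := by
  ext n
  rw [coeff_U, coeff_rescale, coeff_rescale, coeff_U, pow_mul]
  congr 2

noncomputable def D : Derivation K R R := (X : R) • derivative K

lemma D_apply (f : R) : D f = X * derivative K f := rfl

lemma coeff_D (n : ℕ) (f : R) : coeff n (D f) = n * coeff n f := by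
  rw [D_apply]
  cases n with
  | zero => simp
  | succ n => rw [coeff_succ_X_mul, coeff_derivative]; push_cast; ring

lemma D_mul (f g : R) : D (f * g) = f * D g + g * D f := by
  simp [Derivation.leibniz]

lemma D_pow (f : R) (n : ℕ) : D (f ^ n) = n * f ^ (n - 1) * D f := by
  rw [Derivation.leibniz_pow]; simp [mul_assoc]

lemma D_one : D 1 = 0 := by simp

lemma D_E2 (f : R) : D (E2 f) = 2 * E2 (D f) := by
  ext n
  have h2 : (2 : R) = C (2 : K) := (map_ofNat C 2).symm
  rw [h2, coeff_C_mul, coeff_D, coeff_expand, coeff_expand, coeff_D]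
  split_ifs with h
  · obtain ⟨m, rfl⟩ := h
    simp; ring
  · simp

lemma U13_D (f : R) : U 13 (D f) = 0 := by
  ext n
  rw [coeff_U, coeff_D]
  have : ((13 * n : ℕ) : K) = 0 := by
    rw [ZMod.natCast_eq_zero_iff]; exact Dvd.intro n rfl
  rw [this]; simp

lemma h13 : (13 : R) = 0 := by
  have : (13 : R) = C (13 : K) := (map_ofNat C 13).symm
  rw [this, show (13 : K) = 0 from by decide, map_zero]

lemma E2_fixed (G : R) (h : E2 G = G) : G = C (constantCoeff G) := by
  ext n
  induction n using Nat.strong_induction_on with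
  | _ n ih =>
    rcases Nat.eq_zero_or_pos n with rfl | hn
    · simp
    · rw [coeff_C, if_neg hn.ne', ← h, coeff_expand]
      split_ifs with hd
      · obtain ⟨m, rfl⟩ := hd
        have : 2 * m / 2 = m := by omega
        rw [this, ih m (by omega), coeff_C, if_neg (by omega)]
      · rfl

lemma E2_order (J u v : R) (h : u * E2 J = v * J) (hu : constantCoeff u ≠ 0)
    (hv : v.order = 1) (h0 : coeff 0 J = 0) (h1 : coeff 1 J = 0) : J = 0 := by
  by_contra hJ
  have e := congrArg PowerSeries.order h
  have hu' : u.order = 0 := by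
    by_contra h'
    exact hu (order_ne_zero_iff_constCoeff_eq_zero.mp h')
  rw [order_mul, order_mul, order_expand, hu', hv] at e
  have hle : ((2 : ℕ) : ℕ∞) ≤ J.order := by
    apply nat_le_order
    intro i hi
    interval_cases i <;> assumption
  obtain ⟨d, hd⟩ := ENat.ne_top_iff_exists.mp (order_eq_top.not.mpr hJ)
  rw [← hd] at e hle
  have e' : 0 + 2 * d = 1 + d := by
    have : ((0 + 2 * d : ℕ) : ℕ∞) = ((1 + d : ℕ) : ℕ∞) := by
      push_cast; simpa using e
    exact_mod_cast this
  have : 2 ≤ d := by exact_mod_cast hle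
  omega

end OverThirteen

open PowerSeries

namespace OverThirteen

noncomputable def W6 (x y : R) : R :=
  x ^ 6 + 10 * x ^ 5 * y + 4 * x ^ 4 * y ^ 2 + 10 * x ^ 3 * y ^ 3 + 4 * x ^ 2 * y ^ 4
    + 10 * x * y ^ 5 + y ^ 6

lemma W6_landen (u v : R) : W6 (10 * (u + v) ^ 2) (u * v) = W6 (u ^ 2) (v ^ 2) := by
  unfold W6
  linear_combination ((76923)*u^0*v^12 + (1000000)*u^1*v^11 + (5849230)*u^2*v^10 + (20410000)*u^3*v^9 +
      (47398492)*u^4*v^8 + (77260900)*u^5*v^7 + (90692507)*u^6*v^6 + (77260900)*u^7*v^5 +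
      (47398492)*u^8*v^4 + (20410000)*u^9*v^3 + (5849230)*u^10*v^2 + (1000000)*u^11*v^1 +
      (76923)*u^12*v^0) * h13

lemma E2_a4 : (E2 a) ^ 4 = 10 * (a ^ 2 + b ^ 2) ^ 2 := by
  linear_combination 10 * (2 * (E2 a) ^ 2 + (a ^ 2 + b ^ 2)) * landen1 - 3 * (E2 a) ^ 4 * h13

lemma E2_b4 : (E2 b) ^ 4 = a ^ 2 * b ^ 2 := by
  linear_combination ((E2 b) ^ 2 + a * b) * landen2

lemma W_eq : W6 (a ^ 4) (b ^ 4) = 1 := by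
  have h : E2 (W6 (a ^ 4) (b ^ 4)) = W6 (a ^ 4) (b ^ 4) := by
    have e : E2 (W6 (a ^ 4) (b ^ 4)) = W6 ((E2 a) ^ 4) ((E2 b) ^ 4) := by
      simp only [W6, map_add, map_mul, map_pow, map_ofNat]
    rw [e, E2_a4, E2_b4, W6_landen]
    congr 1 <;> ring
  rw [E2_fixed _ h]
  have : constantCoeff (W6 (a ^ 4) (b ^ 4)) = 1 := by
    simp only [W6, map_add, map_mul, map_pow, map_ofNat, a0, b0]
    decide
  rw [this, map_one]

lemma order_ab : (a ^ 2 - b ^ 2).order = 1 := by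
  have := (order_eq_nat (φ := a ^ 2 - b ^ 2) (n := 1)).mpr ⟨?_, ?_⟩
  · exact_mod_cast this
  · rw [map_sub, coeff_one_pow, coeff_one_pow, a0, b0, a1, b1]; decide
  · intro i hi
    interval_cases i
    simp [a0, b0]

lemma J_eq : 4 * (b * D a - a * D b) - (a ^ 4 - b ^ 4) * a * b = 0 := by
  have d1 : 8 * E2 a * E2 (D a) = 2 * a * D a + 2 * b * D b := by
    have := congrArg D landen1
    have h2 : (2 : R) = C (2 : K) := (map_ofNat C 2).symm
    rw [map_add, D_pow, D_pow, two_mul, map_add, D_pow, D_E2] at this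
    norm_num at this
    linear_combination this
  have d2 : 4 * E2 b * E2 (D b) = a * D b + b * D a := by
    have := congrArg D landen2
    rw [D_pow, D_mul, D_E2] at this
    norm_num at this
    linear_combination this
  have e : 8 * (E2 a) ^ 2 * (E2 b) ^ 2 * ((E2 a) ^ 4 - (E2 b) ^ 4)
      = (a ^ 2 + b ^ 2) * a * b * (a ^ 2 - b ^ 2) ^ 2 := by
    have : 8 * (E2 a) ^ 2 * (E2 b) ^ 2 * ((E2 a) ^ 4 - (E2 b) ^ 4)
      = (2 * (E2 a) ^ 2) * (E2 b) ^ 2 * ((2 * (E2 a) ^ 2) ^ 2 - 4 * ((E2 b) ^ 2) ^ 2) := by ring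
    rw [this, landen1, landen2]; ring
  apply E2_order _ (8 * E2 a * E2 b) (a ^ 2 - b ^ 2)
  · simp only [map_sub, map_mul, map_pow, map_ofNat]
    linear_combination 4 * (E2 b) ^ 2 * d1 - 8 * (E2 a) ^ 2 * d2 + (8 * a * D a + 8 * b * D b) * landen2
      - 4 * (a * D b + b * D a) * landen1 - e
  · simp only [map_mul, map_ofNat, constantCoeff_expand, a0, b0]; decide
  · exact order_ab
  · have h1 : constantCoeff (D a) = 0 := by
      rw [← coeff_zero_eq_constantCoeff_apply, coeff_D]; simp
    have h2 : constantCoeff (D b) = 0 := by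
      rw [← coeff_zero_eq_constantCoeff_apply, coeff_D]; simp
    simp [a0, b0, h1, h2]
  · have h1 : constantCoeff (D a) = 0 := by
      rw [← coeff_zero_eq_constantCoeff_apply, coeff_D]; simp
    have h2 : constantCoeff (D b) = 0 := by
      rw [← coeff_zero_eq_constantCoeff_apply, coeff_D]; simp
    have h4 : (4 : R) = C (4 : K) := (map_ofNat C 4).symm
    rw [map_sub, h4, coeff_C_mul, map_sub]
    simp only [coeff_one_mul, coeff_one_pow, map_sub, map_pow, map_mul, a0, b0, a1, b1, h1, h2,
      coeff_D]
    decide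

noncomputable def ai : R := a⁻¹
noncomputable def bi : R := b⁻¹
lemma a_ai : a * ai = 1 := PowerSeries.mul_inv_cancel _ (by rw [a0]; decide)
lemma b_bi : b * bi = 1 := PowerSeries.mul_inv_cancel _ (by rw [b0]; decide)

noncomputable def t : R := 1 - b ^ 4 * ai ^ 4

lemma a4_ai4 : a ^ 4 * ai ^ 4 = 1 := by rw [← mul_pow, a_ai, one_pow]
lemma b4_bi4 : b ^ 4 * bi ^ 4 = 1 := by rw [← mul_pow, b_bi, one_pow]

lemma a4_t : a ^ 4 * t = a ^ 4 - b ^ 4 := by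
  unfold t; linear_combination - b ^ 4 * a4_ai4

lemma a_cancel (n : ℕ) (f g : R) (h : a ^ n * f = a ^ n * g) : f = g := by
  have h' : a ^ n * ai ^ n = 1 := by rw [← mul_pow, a_ai, one_pow]
  linear_combination ai ^ n * h - (f - g) * h'

lemma b_cancel (n : ℕ) (f g : R) (h : b ^ n * f = b ^ n * g) : f = g := by
  have h' : b ^ n * bi ^ n = 1 := by rw [← mul_pow, b_bi, one_pow]
  linear_combination bi ^ n * h - (f - g) * h'

lemma D_t : D t = t * b ^ 4 := by
  have h := congrArg D a4_t
  rw [D_mul, map_sub, D_pow, D_pow] at h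
  norm_num at h
  apply a_cancel 5
  linear_combination a * h + b ^ 3 * J_eq - (4 * D a + a * b ^ 4) * a4_t

lemma U_t (c k : ℕ) (hk : ¬ 13 ∣ k) : U 13 ((c : R) * t ^ k * b ^ 4) = 0 := by
  have hk0 : (k : K) ≠ 0 := by rwa [Ne, ZMod.natCast_eq_zero_iff]
  have hk1 : k ≠ 0 := by rintro rfl; simp at hk
  have hD : D (t ^ k) = (k : R) * (t ^ k * b ^ 4) := by
    rw [D_pow, D_t, ← mul_assoc, mul_assoc (k : R), ← pow_succ, Nat.sub_add_cancel (by omega)]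
    ring
  have h := U13_D (t ^ k)
  rw [hD, ← map_natCast (C : K →+* R), ← smul_eq_C_mul, map_smul] at h
  have h' := (smul_eq_zero.mp h).resolve_left hk0
  rw [mul_assoc, ← map_natCast (C : K →+* R), ← smul_eq_C_mul, map_smul, h', smul_zero]

lemma U_a4_b4 : b ^ 4 * U 13 (a ^ 4) = a ^ 4 * U 13 (b ^ 4) := by
  have h0 : (1 - t) ^ 13 * (a ^ 4 - b ^ 4) = t ^ 13 * b ^ 4 +
      (((1 : ℕ) : R) * t ^ 1 * b ^ 4 + ((1 : ℕ) : R) * t ^ 2 * b ^ 4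
      + ((1 : ℕ) : R) * t ^ 3 * b ^ 4 + ((1 : ℕ) : R) * t ^ 4 * b ^ 4
      + ((1 : ℕ) : R) * t ^ 5 * b ^ 4 + ((1 : ℕ) : R) * t ^ 6 * b ^ 4
      + ((1 : ℕ) : R) * t ^ 7 * b ^ 4 + ((1 : ℕ) : R) * t ^ 8 * b ^ 4
      + ((1 : ℕ) : R) * t ^ 9 * b ^ 4 + ((1 : ℕ) : R) * t ^ 10 * b ^ 4
      + ((1 : ℕ) : R) * t ^ 11 * b ^ 4 + ((1 : ℕ) : R) * t ^ 12 * b ^ 4) := by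
    have e : (1 - t) ^ 13 * (a ^ 4 - b ^ 4) = t * (1 - t) ^ 12 * b ^ 4 := by
      linear_combination -(1 - t) ^ 12 * a4_t
    rw [e]
    push_cast
    linear_combination (b ^ 4) * (- t ^ 2 + 5 * t ^ 3 - 17 * t ^ 4 + 38 * t ^ 5 - 61 * t ^ 6
      + 71 * t ^ 7 - 61 * t ^ 8 + 38 * t ^ 9 - 17 * t ^ 10 + 5 * t ^ 11 - t ^ 12) * h13
  have h := congrArg (U 13) h0
  rw [U13_pow_mul, map_add, U13_pow_mul] at h
  simp only [map_add, map_sub] at h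
  iterate 12 rw [U_t _ _ (by norm_num)] at h
  linear_combination a ^ 4 * h + (U 13 (a ^ 4) - U 13 (b ^ 4) + U 13 (b ^ 4)) * a4_t

lemma U_b4 : U 13 (b ^ 4) = b ^ 4 := by
  obtain ⟨r, hr⟩ : ∃ r, r = U 13 (b ^ 4) * bi ^ 4 := ⟨_, rfl⟩
  have hb : U 13 (b ^ 4) = r * b ^ 4 := by
    rw [hr]; linear_combination - U 13 (b ^ 4) * b4_bi4
  have ha : U 13 (a ^ 4) = r * a ^ 4 := by
    apply b_cancel 4
    rw [U_a4_b4, hb]; ring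
  have hE : E2 r = r := by
    have e1 : 4 * (E2 a) ^ 4 = a ^ 4 + b ^ 4 + 2 * (E2 b) ^ 4 := by
      linear_combination (2 * (E2 a) ^ 2 + (a ^ 2 + b ^ 2)) * landen1 - 2 * E2_b4
    have e2 : (4 : K) • E2 (a ^ 4) = a ^ 4 + b ^ 4 + (2 : K) • E2 (b ^ 4) := by
      rw [smul_eq_C_mul, smul_eq_C_mul, map_ofNat, map_ofNat, map_pow, map_pow, e1]
    have e3 := congrArg (U 13) e2
    simp only [map_add, map_smul, U13_E2, ha, hb] at e3
    rw [smul_eq_C_mul, smul_eq_C_mul, map_ofNat, map_ofNat] at e3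
    simp only [map_mul, map_pow] at e3
    have e4 : (a ^ 4 + b ^ 4) * E2 r = (a ^ 4 + b ^ 4) * r := by
      linear_combination e3 - E2 r * e1
    have hne : a ^ 4 + b ^ 4 ≠ 0 := by
      intro h
      have := congrArg constantCoeff h
      simp only [map_add, map_pow, a0, b0, map_zero] at this
      exact absurd this (by decide)
    exact mul_left_cancel₀ hne e4
  have h1 := E2_fixed r hE
  have h2 : constantCoeff r = 1 := by
    have := congrArg (coeff 0) hb
    rw [coeff_U] at this
    simp [b0] at this
    exact this.symm
  rw [hb, h1, h2]; simp

lemma U_a12 : U 13 (a ^ 12) = a ^ 12 * (1 + 10 * t + 3 * t ^ 2) := by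
  have hy : b ^ 4 = a ^ 4 * (1 - t) := by linear_combination a4_t
  have hW : a ^ 24 * W6 1 (1 - t) = 1 := by
    have e : a ^ 24 * W6 1 (1 - t) = W6 (a ^ 4) (b ^ 4) := by
      rw [hy]; unfold W6; ring
    rw [e, W_eq]
  have hQ : (W6 1 (1 - t)) ^ 4 * (1 - t) ^ 12 * b ^ 4
      = b ^ 4 + t ^ 13 * (10 * b ^ 4) + (t ^ 2) ^ 13 * (3 * b ^ 4) + (((2 : ℕ) : R) * t ^ 1 * b ^ 4 + ((7 : ℕ) : R) * t ^ 2 * b ^ 4 + ((3 : ℕ) : R) * t ^ 3 *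
      b ^ 4 + ((8 : ℕ) : R) * t ^ 4 * b ^ 4 + ((1 : ℕ) : R) * t ^ 5 * b ^ 4 + ((5 : ℕ) : R) *
      t ^ 6 * b ^ 4 + ((9 : ℕ) : R) * t ^ 7 * b ^ 4 + ((6 : ℕ) : R) * t ^ 8 * b ^ 4 + ((5 : ℕ)
      : R) * t ^ 9 * b ^ 4 + ((3 : ℕ) : R) * t ^ 10 * b ^ 4 + ((8 : ℕ) : R) * t ^ 11 * b ^ 4 +
      ((6 : ℕ) : R) * t ^ 12 * b ^ 4 + ((7 : ℕ) : R) * t ^ 14 * b ^ 4 + ((1 : ℕ) : R) * t ^ 15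
      * b ^ 4 + ((2 : ℕ) : R) * t ^ 16 * b ^ 4 + ((1 : ℕ) : R) * t ^ 17 * b ^ 4 + ((12 : ℕ) :
      R) * t ^ 18 * b ^ 4 + ((1 : ℕ) : R) * t ^ 19 * b ^ 4 + ((2 : ℕ) : R) * t ^ 20 * b ^ 4 +
      ((1 : ℕ) : R) * t ^ 21 * b ^ 4 + ((7 : ℕ) : R) * t ^ 22 * b ^ 4 + ((10 : ℕ) : R) * t ^
      23 * b ^ 4 + ((6 : ℕ) : R) * t ^ 24 * b ^ 4 + ((8 : ℕ) : R) * t ^ 25 * b ^ 4 + ((5 : ℕ)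
      : R) * t ^ 27 * b ^ 4 + ((6 : ℕ) : R) * t ^ 28 * b ^ 4 + ((9 : ℕ) : R) * t ^ 29 * b ^ 4
      + ((5 : ℕ) : R) * t ^ 30 * b ^ 4 + ((1 : ℕ) : R) * t ^ 31 * b ^ 4 + ((8 : ℕ) : R) * t ^
      32 * b ^ 4 + ((3 : ℕ) : R) * t ^ 33 * b ^ 4 + ((7 : ℕ) : R) * t ^ 34 * b ^ 4 + ((2 : ℕ)
      : R) * t ^ 35 * b ^ 4 + ((1 : ℕ) : R) * t ^ 36 * b ^ 4) := by
    unfold W6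
    push_cast
    linear_combination (b ^ 4) * ((196923)*t^0 + (-4726154)*t^1 + (55394461)*t^2 + (-422577231)*t^3 + (2358948184)*t^4 +
      (-10270964677)*t^5 + (36302013255)*t^6 + (-107019960333)*t^7 + (268321862615)*t^8 +
      (-580448651325)*t^9 + (1095297906375)*t^10 + (-1818030637100)*t^11 +
      (2671596431703)*t^12 + (-3492842059114)*t^13 + (4077761334889)*t^14 +
      (-4262241570549)*t^15 + (3995453821870)*t^16 + (-3361879679869)*t^17 +
      (2539352862216)*t^18 + (-1720665114301)*t^19 + (1044428918452)*t^20 +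
      (-566635508029)*t^21 + (273927248921)*t^22 + (-117524654674)*t^23 + (44522062144)*t^24 +
      (-14798546768)*t^25 + (4282030589)*t^26 + (-1068189609)*t^27 + (226972602)*t^28 +
      (-40462805)*t^29 + (5936779)*t^30 + (-699277)*t^31 + (63965)*t^32 + (-4339)*t^33 +
      (203)*t^34 + (-6)*t^35) * h13
  have h0 : (1 - t) ^ 13 * a ^ 12 = (a ^ 8) ^ 13 * ((W6 1 (1 - t)) ^ 4 * (1 - t) ^ 12 * b ^ 4) := by
    have : (a ^ 8) ^ 13 * ((W6 1 (1 - t)) ^ 4 * (1 - t) ^ 12 * b ^ 4)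
      = (a ^ 24 * W6 1 (1 - t)) ^ 4 * (1 - t) ^ 12 * a ^ 8 * b ^ 4 := by ring
    rw [this, hW, hy]; ring
  have h := congrArg (U 13) h0
  have k10 : U 13 (10 * b ^ 4) = 10 * b ^ 4 := by
    have := (U 13).map_smul (10 : K) (b ^ 4)
    rwa [smul_eq_C_mul, smul_eq_C_mul, map_ofNat, U_b4] at this
  have k3 : U 13 (3 * b ^ 4) = 3 * b ^ 4 := by
    have := (U 13).map_smul (3 : K) (b ^ 4)
    rwa [smul_eq_C_mul, smul_eq_C_mul, map_ofNat, U_b4] at this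
  rw [U13_pow_mul, U13_pow_mul, hQ] at h
  simp only [map_add] at h
  iterate 34 rw [U_t _ _ (by norm_num)] at h
  rw [U_b4, U13_pow_mul, U13_pow_mul, k10, k3] at h
  apply b_cancel 4
  linear_combination a ^ 4 * h + (U 13 (a ^ 12)) * hy

end OverThirteen

open PowerSeries

namespace OverThirteen

noncomputable def xi (n : ℕ) : R := (1 - X ^ n)⁻¹
noncomputable def yi (n : ℕ) : R := (1 + X ^ n)⁻¹

lemma x_xi (n : ℕ) : (1 - X ^ (n + 1)) * xi (n + 1) = 1 :=
  PowerSeries.mul_inv_cancel _ (by simp)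
lemma y_yi (n : ℕ) : (1 + X ^ (n + 1)) * yi (n + 1) = 1 :=
  PowerSeries.mul_inv_cancel _ (by simp)

noncomputable def PP (k : ℕ) : R := ∏ i ∈ Finset.range k, ((1 + X ^ (i + 1)) * xi (i + 1))
noncomputable def PI (k : ℕ) : R := ∏ i ∈ Finset.range k, ((1 - X ^ (i + 1)) * yi (i + 1))

lemma PP_succ (k : ℕ) : PP (k + 1) = PP k * ((1 + X ^ (k + 1)) * xi (k + 1)) := by
  unfold PP; rw [Finset.prod_range_succ]
lemma PI_succ (k : ℕ) : PI (k + 1) = PI k * ((1 - X ^ (k + 1)) * yi (k + 1)) := by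
  unfold PI; rw [Finset.prod_range_succ]

lemma PP_PI (k : ℕ) : PP k * PI k = 1 := by
  unfold PP PI
  rw [← Finset.prod_mul_distrib]
  apply Finset.prod_eq_one
  intro i _
  linear_combination (1 + X ^ (i + 1)) * yi (i + 1) * x_xi i + y_yi i

noncomputable def TT (k M : ℕ) : R :=
  ∑ j ∈ Finset.Ico k M, X ^ ((k + 1) * (j + 1)) * (PI j * yi (j + 1))

lemma TT_self (k : ℕ) : TT k k = 0 := by simp [TT]
lemma TT_succ (k M : ℕ) (h : k ≤ M) :
    TT k (M + 1) = TT k M + X ^ ((k + 1) * (M + 1)) * (PI M * yi (M + 1)) := by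
  unfold TT; rw [Finset.sum_Ico_succ_top h]

lemma PI_TT (M : ℕ) : PI M = 1 - 2 * TT 0 M := by
  induction M with
  | zero => simp [PI, TT]
  | succ M ih =>
    rw [TT_succ 0 M (by omega), PI_succ]
    have := y_yi M
    simp only [zero_add, one_mul]
    linear_combination ih + PI M * this

lemma TT_step (k d : ℕ) :
    PP k * TT k (k + 1 + d) + PP (k + 1) * TT (k + 1) (k + 1 + d)
      = X ^ ((k + 1) ^ 2) - PP k * xi (k + 1) * X ^ ((k + 1) * (k + 1 + d + 1)) * PI (k + 1 + d) := by
  induction d with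
  | zero =>
    rw [add_zero, TT_self, TT_succ k k le_rfl, TT_self, PI_succ]
    have e : (X : R) ^ ((k + 1) * (k + 1 + 1)) = X ^ ((k + 1) ^ 2) * X ^ (k + 1) := by
      rw [← pow_add]; congr 1; ring
    have e2 : (X : R) ^ ((k + 1) * (k + 1)) = X ^ ((k + 1) ^ 2) := by
      congr 1; ring
    rw [e, e2]
    linear_combination X ^ ((k + 1) ^ 2) * yi (k + 1) * PP_PI k
      + X ^ ((k + 1) ^ 2) * X ^ (k + 1) * yi (k + 1) * xi (k + 1) * (1 - X ^ (k + 1)) * PP_PI k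
      + X ^ ((k + 1) ^ 2) * X ^ (k + 1) * yi (k + 1) * x_xi k
      + X ^ ((k + 1) ^ 2) * y_yi k
  | succ d ih =>
    rw [← add_assoc, TT_succ k _ (by omega), TT_succ (k + 1) _ (by omega), PI_succ]
    generalize hM : k + 1 + d = M at *
    have e : (X : R) ^ ((k + 1) * (M + 1 + 1)) = X ^ ((k + 1) * (M + 1)) * X ^ (k + 1) := by
      rw [← pow_add]; congr 1
    have e2 : (X : R) ^ ((k + 1 + 1) * (M + 1)) = X ^ ((k + 1) * (M + 1)) * X ^ (M + 1) := by
      rw [← pow_add]; congr 1; ring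
    rw [e, e2]
    have e3 := PP_succ k
    have h1 := x_xi k
    have h2 := y_yi M
    generalize (X : R) ^ ((k + 1) * (M + 1)) = Z at *
    linear_combination ih + Z * X ^ (M + 1) * PI M * yi (M + 1) * e3
      - Z * PP k * PI M * yi (M + 1) * h1 + PP k * xi (k + 1) * Z * PI M * h2

noncomputable def SS (k : ℕ) : R :=
  1 + 2 * ∑ i ∈ Finset.range k, (-1) ^ (i + 1) * X ^ ((i + 1) ^ 2)

lemma PI_SS (M k : ℕ) (h : k ≤ M) :
    ∃ g, PI M = SS k + 2 * (-1) ^ (k + 1) * PP k * TT k M + X ^ (M + 1) * g := by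
  induction k with
  | zero =>
    refine ⟨0, ?_⟩
    rw [PI_TT]; simp [SS, PP]; ring
  | succ k ih =>
    obtain ⟨g, hg⟩ := ih (by omega)
    obtain ⟨d, rfl⟩ := Nat.exists_eq_add_of_le h
    have hs := TT_step k d
    have e : (X : R) ^ ((k + 1) * (k + 1 + d + 1))
        = X ^ (k + 1 + d + 1) * X ^ (k * (k + 1 + d + 1)) := by
      rw [← pow_add]; congr 1; ring
    rw [e] at hs
    refine ⟨g - 2 * (-1) ^ (k + 1) * (PP k * xi (k + 1) * X ^ (k * (k + 1 + d + 1)) * PI (k + 1 + d)), ?_⟩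
    have hSS : SS (k + 1) = SS k + 2 * ((-1) ^ (k + 1) * X ^ ((k + 1) ^ 2)) := by
      unfold SS; rw [Finset.sum_range_succ]; ring
    rw [hSS]
    rw [pow_succ (-1 : R) (k + 1)]
    linear_combination hg + 2 * (-1) ^ (k + 1) * hs

lemma sg_nat (r : ℕ) : sg (r : ℤ) = (-1) ^ r := by
  unfold sg
  by_cases h : Even r
  · simp [h]
  · simp [h, (Nat.not_even_iff_odd.mp h).neg_one_pow]

lemma sg_neg (x : ℤ) : sg (-x) = sg x := by simp [sg]

lemma coeff_SS (n M : ℕ) (h : n ≤ M) : coeff n (SS M) = coeff n b := by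
  have h2 : (2 : R) = C (2 : K) := (map_ofNat C 2).symm
  have hm : ∀ i : ℕ, (-1 : R) ^ i = C ((-1 : K) ^ i) := fun i => by simp
  unfold SS b th
  rw [h2, map_add, coeff_C_mul, map_sum, coeff_mk]
  simp only [hm, coeff_C_mul, coeff_X_pow, coeff_one]
  by_cases hn : ∃ r, n = r ^ 2
  · obtain ⟨r, rfl⟩ := hn
    rcases Nat.eq_zero_or_pos r with rfl | hr
    · have : S (0 ^ 2) = {0} := S_zero
      rw [this]
      have hz : ∀ i : ℕ, ¬ (0 = (i + 1) ^ 2) := fun i => by positivity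
      simp [sg, hz]
    · have hS : S (r ^ 2) = {(r : ℤ), -(r : ℤ)} := by
        ext x
        rw [mem_S]
        push_cast
        simp [sq_eq_sq_iff_eq_or_eq_neg]
      rw [hS, Finset.sum_pair (by omega), sg_neg, sg_nat, Finset.sum_eq_single (r - 1)]
      · rw [Nat.sub_add_cancel hr]
        have : r ^ 2 ≠ 0 := by positivity
        simp [hr.ne']; ring
      · intro i _ hi
        have : ¬ r ^ 2 = (i + 1) ^ 2 := by
          intro h'
          have := Nat.pow_left_injective (n := 2) (by norm_num) h'
          omega
        simp [this]
      · intro h'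
        exfalso; apply h'
        rw [Finset.mem_range]
        have : r ≤ r ^ 2 := Nat.le_self_pow (by norm_num) r
        omega
  · have hS : S n = ∅ := by
      apply Finset.eq_empty_of_forall_notMem
      intro x hx
      rw [mem_S] at hx
      exact hn ⟨x.natAbs, by zify; simp [hx]⟩
    have h0 : n ≠ 0 := fun h => hn ⟨0, by simpa using h⟩
    rw [hS]
    simp only [h0, if_false, Finset.sum_empty, zero_add]
    rw [Finset.sum_eq_zero]; simp
    intro i _
    rw [if_neg (fun h => hn ⟨_, h⟩)]; simp

lemma coeff_PI (n M : ℕ) (h : n ≤ M) : coeff n (PI M) = coeff n b := by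
  obtain ⟨g, hg⟩ := PI_SS M M le_rfl
  rw [hg, TT_self, mul_zero, add_zero, map_add, coeff_SS n M h, coeff_X_pow_mul']
  rw [if_neg (by omega), add_zero]

open PowerSeries.WithPiTopology Filter Topology

noncomputable def GP : R := PowerSeries.mk fun n => (overpartition n : K)

lemma tendsto_PI : Tendsto PI atTop (𝓝 b) := by
  rw [tendsto_iff_coeff_tendsto]
  intro d
  exact tendsto_atTop_of_eventually_const (i₀ := d) fun i hi => coeff_PI d i hi

lemma GP_eq : GP = (PowerSeries.mk fun n ↦ ((Nat.Partition.distincts n).card : K)) *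
    (PowerSeries.mk fun n ↦ (Fintype.card (Nat.Partition n) : K)) := by
  ext n
  rw [coeff_mul, Finset.Nat.sum_antidiagonal_eq_sum_range_succ_mk]
  simp [GP, overpartition]

lemma tendsto_PP : Tendsto PP atTop (𝓝 GP) := by
  have h1 := Nat.Partition.hasProd_powerSeriesMk_card_restricted K (fun _ => True)
  have h2 := Nat.Partition.hasProd_powerSeriesMk_card_countRestricted K (m := 2) (by norm_num)
  have h3 := (h2.mul h1).tendsto_prod_nat
  have e : GP = (PowerSeries.mk fun n ↦ ((Nat.Partition.countRestricted n 2).card : K)) *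
      (PowerSeries.mk fun n ↦ ((Nat.Partition.restricted n (fun _ => True)).card : K)) := by
    rw [GP_eq]
    simp [Nat.Partition.countRestricted_two, Nat.Partition.restricted]
  rw [e]
  convert h3 using 2 with k
  unfold PP
  refine Finset.prod_congr rfl fun i _ => ?_
  rw [if_pos trivial]
  congr 1
  · simp [Finset.sum_range_succ]
  · have := one_sub_mul_tsum_pow_of_constantCoeff_eq_zero (R := K) (f := X ^ (i + 1)) (by simp)
    simp only [← pow_mul] at this
    linear_combination (∑' j : ℕ, (X : R) ^ ((i + 1) * j)) * x_xi i - xi (i + 1) * this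

lemma GP_mul_b : GP * b = 1 := by
  have h := tendsto_PP.mul tendsto_PI
  simp only [PP_PI] at h
  exact tendsto_nhds_unique h tendsto_const_nhds

end OverThirteen

open PowerSeries

namespace OverThirteen

noncomputable def A : R := E4 a
noncomputable def B : R := a - A
noncomputable def T : R := a ^ 4 - b ^ 4

def Supp (m r : ℕ) (f : R) : Prop := ∀ n, n % m ≠ r % m → coeff n f = 0

lemma Supp.mul {m r s : ℕ} {f g : R} (hf : Supp m r f) (hg : Supp m s g) :
    Supp m (r + s) (f * g) := by
  intro n hn
  rw [coeff_mul]
  apply Finset.sum_eq_zero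
  rintro ⟨i, j⟩ h
  rw [Finset.HasAntidiagonal.mem_antidiagonal] at h
  dsimp only at h ⊢
  by_cases h1 : i % m = r % m
  · by_cases h2 : j % m = s % m
    · exfalso; apply hn
      rw [← h, Nat.add_mod, h1, h2, ← Nat.add_mod]
    · rw [hg j h2, mul_zero]
  · rw [hf i h1, zero_mul]

lemma Supp.pow {m r : ℕ} {f : R} (hf : Supp m r f) (k : ℕ) : Supp m (k * r) (f ^ k) := by
  induction k with
  | zero =>
    intro n hn
    rw [pow_zero, coeff_one, if_neg]
    rintro rfl
    simp at hn
  | succ k ih =>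
    rw [pow_succ, add_mul, one_mul]
    exact ih.mul hf

lemma Supp.C_mul {m r : ℕ} {f : R} (hf : Supp m r f) (c : K) : Supp m r (C c * f) := by
  intro n hn
  rw [coeff_C_mul, hf n hn, mul_zero]

lemma coeff_A (n : ℕ) : coeff n A = if 4 ∣ n then coeff n a else 0 := by
  unfold A
  rw [coeff_expand]
  split_ifs with h
  · obtain ⟨m, rfl⟩ := h
    rw [coeff_a_four, Nat.mul_div_cancel_left _ (by norm_num)]
  · rfl

lemma sq_mod (n : ℕ) (h : coeff n a ≠ 0) : n % 4 = 0 ∨ n % 8 = 1 := by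
  by_contra hc
  apply h
  apply coeff_a_zero_of
  intro x hx
  rcases Int.even_or_odd' x with ⟨y, rfl | rfl⟩
  · have : (n : ℤ) = 4 * y ^ 2 := by rw [← hx]; ring
    omega
  · obtain ⟨z, hz⟩ := Int.even_mul_succ_self y
    have : (n : ℤ) = 8 * z + 1 := by rw [← hx]; linear_combination 4 * hz
    omega

lemma supp_A : Supp 4 0 A := by
  intro n hn
  rw [coeff_A, if_neg (by omega)]

lemma supp_B8 : Supp 8 1 B := by
  intro n hn
  unfold B
  rw [map_sub, coeff_A]
  split_ifs with h
  · simp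
  · by_contra hc
    rw [sub_zero] at hc
    have := sq_mod n hc
    omega

lemma supp_B : Supp 4 1 B := by
  intro n hn
  exact supp_B8 n (by omega)

lemma a_eq : a = A + B := by unfold B; ring

lemma b_eq : b = A - B := by
  unfold B
  ext n
  rw [map_sub, map_sub, coeff_A, coeff_b]
  split_ifs with h
  · have : Even n := by obtain ⟨m, rfl⟩ := h; exact ⟨2 * m, by ring⟩
    simp [this.neg_one_pow]
  · by_cases hc : coeff n a = 0
    · simp [hc]
    · have := sq_mod n hc
      have ho : Odd n := by rw [Nat.odd_iff]; omega
      simp [ho.neg_one_pow]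

lemma E4_eq (f : R) : E4 f = E2 (E2 f) :=
  expand_mul 2 (by norm_num) 2 (by norm_num) f

lemma E4_b : (E4 b) ^ 4 = A ^ 4 - B ^ 4 := by
  have h := congrArg E2 E2_b4
  simp only [map_pow, map_mul] at h
  rw [← E4_eq] at h
  have h2 : (2 : R) * (E4 b) ^ 4 = 2 * (A ^ 4 - B ^ 4) := by
    rw [h]
    have : 2 * ((E2 a) ^ 2 * (E2 b) ^ 2) = (2 * (E2 a) ^ 2) * (E2 b) ^ 2 := by ring
    rw [this, landen1, landen2, b_eq, a_eq]
    ring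
  linear_combination 7 * h2 - ((E4 b) ^ 4 - (A ^ 4 - B ^ 4)) * h13

lemma B4 : B ^ 4 = E4 T := by
  unfold T
  rw [map_sub, map_pow, map_pow, E4_b]
  unfold A
  ring

noncomputable def F (α β γ : K) : R := C α * a ^ 11 + C β * (a ^ 7 * T) + C γ * (a ^ 3 * T ^ 2)

lemma F_expand (α β γ : K) : F α β γ =
      C (1 * α + 0 * β + 0 * γ) * A ^ 11 * B ^ 0
      + C (11 * α + 8 * β + 0 * γ) * A ^ 10 * B ^ 1
      + C (55 * α + 56 * β + 64 * γ) * A ^ 9 * B ^ 2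
      + C (165 * α + 176 * β + 192 * γ) * A ^ 8 * B ^ 3
      + C (330 * α + 336 * β + 320 * γ) * A ^ 7 * B ^ 4
      + C (462 * α + 448 * β + 448 * γ) * A ^ 6 * B ^ 5
      + C (462 * α + 448 * β + 448 * γ) * A ^ 5 * B ^ 6
      + C (330 * α + 336 * β + 320 * γ) * A ^ 4 * B ^ 7
      + C (165 * α + 176 * β + 192 * γ) * A ^ 3 * B ^ 8
      + C (55 * α + 56 * β + 64 * γ) * A ^ 2 * B ^ 9
      + C (11 * α + 8 * β + 0 * γ) * A ^ 1 * B ^ 10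
      + C (1 * α + 0 * β + 0 * γ) * A ^ 0 * B ^ 11 := by
  unfold F T
  rw [b_eq, a_eq]
  simp only [map_add, map_mul, map_ofNat, map_one, map_zero]
  ring

lemma U4_zero (c : K) (i j : ℕ) (hj : ¬ 4 ∣ j) : U 4 (C c * A ^ i * B ^ j) = 0 := by
  ext n
  rw [coeff_U, map_zero]
  apply (((supp_A.pow i).C_mul c).mul (supp_B.pow j))
  omega

lemma U4_four (c : K) (i k : ℕ) : U 4 (C c * A ^ i * B ^ (4 * k)) = C c * a ^ i * T ^ k := by
  have : C c * A ^ i * B ^ (4 * k) = E4 (C c * a ^ i * T ^ k) * 1 := by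
    rw [mul_one, map_mul, map_mul, map_pow, map_pow, ← B4, pow_mul, expand_C]
    rfl
  rw [this, U_mul]
  have h1 : U 4 1 = 1 := by
    ext n
    rw [coeff_U, coeff_one, coeff_one]
    simp
  rw [h1, mul_one]

lemma U4_F (α β γ : K) : U 4 (F α β γ) =
    F α (330 * α + 336 * β + 320 * γ) (165 * α + 176 * β + 192 * γ) := by
  rw [F_expand]
  simp only [map_add (U 4)]
  rw [U4_zero _ _ 1 (by norm_num), U4_zero _ _ 2 (by norm_num), U4_zero _ _ 3 (by norm_num), U4_zero _ _ 5 (by norm_num), U4_zero _ _ 6 (by norm_num), U4_zero _ _ 7 (by norm_num), U4_zero _ _ 9 (by norm_num), U4_zero _ _ 10 (by norm_num), U4_zero _ _ 11 (by norm_num)]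
  have e0 := U4_four (1 * α + 0 * β + 0 * γ) 11 0
  have e1 := U4_four (330 * α + 336 * β + 320 * γ) 7 1
  have e2 := U4_four (165 * α + 176 * β + 192 * γ) 3 2
  norm_num only at e0 e1 e2
  unfold F
  simp only [zero_mul, add_zero, zero_add, one_mul, pow_zero, mul_one, pow_one] at e0 e1 e2 ⊢
  rw [e0, e1, e2]
  ring

lemma coeff_zero_of (n : ℕ) (c : K) (i j : ℕ) (hj : j % 4 ≠ 3) :
    coeff (8 * n + 7) (C c * A ^ i * B ^ j) = 0 := by
  apply (((supp_A.pow i).C_mul c).mul (supp_B.pow j))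
  omega

lemma supp_E : Supp 8 0 (A ^ 4 - 7 * B ^ 4) := by
  have h1 : A ^ 4 - 7 * B ^ 4 = C 7 * E4 (a ^ 4 + b ^ 4) := by
    rw [map_add, map_pow, map_pow, E4_b, map_ofNat]
    change _ = 7 * (A ^ 4 + (A ^ 4 - B ^ 4))
    linear_combination -A ^ 4 * h13
  rw [h1]
  apply Supp.C_mul
  intro n hn
  rw [coeff_expand]
  split_ifs with h
  · obtain ⟨m, rfl⟩ := h
    have e : 4 * m / 4 = m := by omega
    rw [e]
    have ho : Odd m := by rw [Nat.odd_iff]; omega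
    have hN : N (a ^ 4 + b ^ 4) = a ^ 4 + b ^ 4 := by
      rw [map_add, map_pow, map_pow, N_a, N_b, add_comm]
    have h3 := congrArg (coeff m) hN
    rw [coeff_rescale, ho.neg_one_pow] at h3
    have h4 : 2 * coeff m (a ^ 4 + b ^ 4) = 0 := by linear_combination -h3
    exact (mul_eq_zero.mp h4).resolve_left two_ne
  · rfl

lemma coeff_F_final (n : ℕ) : coeff (8 * n + 7) (F 1 4 1) = 0 := by
  rw [F_expand]
  simp only [map_add (coeff (8 * n + 7))]
  rw [coeff_zero_of _ _ _ 0 (by norm_num), coeff_zero_of _ _ _ 1 (by norm_num), coeff_zero_of _ _ _ 2 (by norm_num), coeff_zero_of _ _ _ 4 (by norm_num), coeff_zero_of _ _ _ 5 (by norm_num), coeff_zero_of _ _ _ 6 (by norm_num), coeff_zero_of _ _ _ 8 (by norm_num), coeff_zero_of _ _ _ 9 (by norm_num), coeff_zero_of _ _ _ 10 (by norm_num)]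
  simp only [zero_add, add_zero]
  rw [← map_add, ← map_add]
  obtain ⟨E, hE⟩ : ∃ E, E = A ^ 4 - 7 * B ^ 4 := ⟨_, rfl⟩
  have hs : Supp 8 0 E := hE ▸ supp_E
  have hA : A ^ 4 = E + 7 * B ^ 4 := by rw [hE]; ring
  have e3 : (165 * 1 + 176 * 4 + 192 * 1 : K) = 8 := by decide
  have e7 : (330 * 1 + 336 * 4 + 320 * 1 : K) = 5 := by decide
  have e11 : (1 * 1 + 0 * 4 + 0 * 1 : K) = 1 := by decide
  rw [e3, e7, e11]
  have key : C (8 : K) * A ^ 8 * B ^ 3 + C (5 : K) * A ^ 4 * B ^ 7 + C (1 : K) * A ^ 0 * B ^ 11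
      = C (8 : K) * (E ^ 2 * B ^ 3) + C (428 : K) * B ^ 11 := by
    have : A ^ 8 = (A ^ 4) ^ 2 := by ring
    rw [this, hA]
    simp only [map_ofNat, map_one]
    linear_combination 9 * E * B ^ 7 * h13
  rw [key, map_add, ((hs.pow 2).mul (supp_B8.pow 3)).C_mul 8 _ (by omega),
    (supp_B8.pow 11).C_mul 428 _ (by omega), add_zero]

lemma U_GP : N (U 13 GP) = F 1 10 3 := by
  have h1 : N GP * a = 1 := by
    have := congrArg N GP_mul_b
    rwa [map_mul, N_b, map_one] at this
  have h2 : a ^ 13 * N GP = a ^ 12 := by linear_combination a ^ 12 * h1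
  have h3 := congrArg (U 13) h2
  rw [U13_pow_mul, U13_N, U_a12] at h3
  apply a_cancel 1
  rw [pow_one, h3]
  unfold F T
  simp only [map_ofNat, map_one]
  rw [← a4_t]
  ring

lemma U4_iter : U 4 (U 4 (U 4 (F 1 10 3))) = F 1 4 1 := by
  rw [U4_F, U4_F, U4_F]
  congr 1

lemma main_dvd (n : ℕ) : 13 ∣ overpartition (13 * 2 ^ 6 * (8 * n + 7)) := by
  have h2 := coeff_F_final n
  rw [← U4_iter, coeff_U, coeff_U, coeff_U, ← U_GP, coeff_rescale, coeff_U] at h2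
  have he : Even (4 * (4 * (4 * (8 * n + 7)))) := ⟨2 * (4 * (4 * (8 * n + 7))), by ring⟩
  rw [he.neg_one_pow, one_mul, GP, coeff_mk, ZMod.natCast_eq_zero_iff] at h2
  have e : 13 * 2 ^ 6 * (8 * n + 7) = 13 * (4 * (4 * (4 * (8 * n + 7)))) := by ring
  rw [e]
  exact h2

end OverThirteen

theorem overpartition_thirteen_congruence (n : ℕ) :
    13 ∣ overpartition (13 * 2 ^ 6 * (8 * n + 7)) := by
  exact OverThirteen.main_dvd n
end
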